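/- arXiv:2011.13266 — 3 statements merged into one kernel-verified Lean document; each statement's English description precedes it below -/
import Mathlib

section
/- There exists an absolute constant C > 0 such that the following holds. Let Q ≥ 2 and m ≥ 2 be integers and n ≥ 1 an integer. Suppose B is a subset of Q_{≤Q} such that for every integer q with 1 ≤ q ≤ Q we have |B ∩ Q_{=q}| ≤ n. Then E_{2m}(B) ≤ (log(mQ))^{C^m} · (Q·n)^m. -/
/-- The set of reduced rationals `a/q ∈ [0,1]` with `1 ≤ a ≤ q` and `gcd(a,q) = 1`. -/
def Qeq (q : ℕ) : Finset ℚ :=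
  ((Finset.Icc 1 q).filter fun a => Nat.gcd a q = 1).image fun a : ℕ => (a : ℚ) / (q : ℚ)

/-- The set of rationals in `[0,1]` with denominator at most `Q`. -/
def Qle (Q : ℕ) : Finset ℚ := (Finset.Icc 1 Q).biUnion Qeq

/-- The `2m`-fold additive energy of `B`: the number of tuples
`(b₁, …, b₂ₘ) ∈ B^{2m}` with `b₁ + ⋯ + bₘ = bₘ₊₁ + ⋯ + b₂ₘ`. -/
def addEnergy (m : ℕ) (B : Finset ℚ) : ℕ :=
  (((Fintype.piFinset fun _ : Fin m => B) ×ˢ Fintype.piFinset fun _ : Fin m => B).filter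
    fun p => (∑ i, p.1 i) = ∑ i, p.2 i).card

/-!
Fix the denominators `q₁, …, qₖ` and let `L` be their least common multiple. By orthogonality, `L`
times the number of solutions of `b₁ + ⋯ + bₖ ∈ ℤ` is the sum over one period `L` of a product of
exponential sums, the `i`-th of which is `qᵢ`-periodic. If there is a solution at all, each `qᵢ`
divides the least common multiple of the others. Hence, when a prime `p` is removed from `L`, at
least two of the factors lose a factor `p` from their period, and Cauchy–Schwarz applied to these
two bounds the sum of the product by the product of the `ℓ²` norms over single periods. By
Parseval's identity there are then at most `L⁻¹ ∏ √(qᵢ n) ≤ (Q n) ^ (k / 2) / L` solutions.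

At most `d(L) ^ k` tuples of denominators have least common multiple `L ≤ Q ^ k`, and
submultiplicativity of the divisor function `d` gives `∑ d(L) ^ k / L ≤ (1 + k log Q) ^ (2 ^ k)`.
The energy is the case `k = 2m`, with half of the variables negated.
-/

section Periodic

open Finset Function

lemma sum_range_mul_eq_sum_sum {α : Type*} [AddCommMonoid α] (f : ℕ → α) (m n : ℕ) :
    ∑ x ∈ range (m * n), f x = ∑ x ∈ range m, ∑ t ∈ range n, f (x + m * t) := by
  rw [sum_comm]
  induction n with
  | zero => simp
  | succ n ih =>
    rw [Nat.mul_succ, sum_range_add, ih, sum_range_succ]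
    simp only [add_comm]

lemma sum_range_mul_of_periodic {α : Type*} [AddCommMonoid α] {f : ℕ → α} {m : ℕ}
    (hf : Periodic f m) (n : ℕ) : ∑ x ∈ range (m * n), f x = n • ∑ x ∈ range m, f x := by
  have hshift : ∀ x t, f (x + m * t) = f x := fun x t => by
    rw [mul_comm]
    exact hf.nat_mul t x
  simp only [sum_range_mul_eq_sum_sum, hshift, sum_const, card_range, smul_sum]

lemma sum_range_add_one_of_periodic {α : Type*} [AddCommMonoid α] {f : ℕ → α} {m : ℕ}
    (hf : Periodic f m) : ∑ x ∈ range m, f (x + 1) = ∑ x ∈ range m, f x := by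
  cases m with
  | zero => simp
  | succ m => rw [sum_range_succ, sum_range_succ', hf.eq]

lemma periodic_gcd_of_periodic {α : Type*} {f : ℕ → α} {a b : ℕ} (ha : Periodic f a)
    (hb : Periodic f b) : Periodic f (a.gcd b) := by
  induction a, b using Nat.gcd.induction with
  | H0 b => simpa using hb
  | H1 a b _ ih =>
    rw [Nat.gcd_rec]
    refine ih (fun x => ?_) ha
    calc f (x + b % a) = f (x + b % a + b / a * a) := (ha.nat_mul (b / a) _).symm
      _ = f (x + b) := by rw [add_assoc, mul_comm, Nat.mod_add_div]
      _ = f x := hb x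

/-- The `ℓ²` norm of a `q`-periodic function `g` on one period of `t ↦ g (x + M * t)`; that period
is `q / gcd (q, M)`. It replaces `g` by a function of period `gcd (q, M)` of the same `ℓ²` norm. -/
noncomputable def progressionNorm (q M : ℕ) (g : ℕ → ℝ) (x : ℕ) : ℝ :=
  √(∑ t ∈ range (q / q.gcd M), g (x + M * t) ^ 2)

lemma progressionNorm_nonneg (q M : ℕ) (g : ℕ → ℝ) (x : ℕ) : 0 ≤ progressionNorm q M g x :=
  Real.sqrt_nonneg _

lemma sq_progressionNorm (q M : ℕ) (g : ℕ → ℝ) (x : ℕ) :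
    progressionNorm q M g x ^ 2 = ∑ t ∈ range (q / q.gcd M), g (x + M * t) ^ 2 :=
  Real.sq_sqrt (sum_nonneg fun _ _ => sq_nonneg _)

variable {q M : ℕ} {g : ℕ → ℝ}

lemma periodic_progression (hg : Periodic g q) (M x : ℕ) :
    Periodic (fun t => g (x + M * t)) (q / q.gcd M) := by
  intro t
  have hperiod : M * (q / q.gcd M) = M / q.gcd M * q := by
    rw [← Nat.mul_div_assoc _ (Nat.gcd_dvd_left q M),
      Nat.div_mul_right_comm (Nat.gcd_dvd_right q M)]
  simp only [mul_add, hperiod, ← add_assoc]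
  exact hg.nat_mul _ _

lemma le_progressionNorm (hq : 0 < q) (hg : Periodic g q) (M x t : ℕ) :
    g (x + M * t) ≤ progressionNorm q M g x := by
  have hperiod : 0 < q / q.gcd M := Nat.div_gcd_pos_of_pos_left M hq
  rw [← (periodic_progression hg M x).map_mod_nat t]
  exact Real.le_sqrt_of_sq_le <| single_le_sum (f := fun t => g (x + M * t) ^ 2)
    (fun _ _ => sq_nonneg _) (mem_range.2 (Nat.mod_lt t hperiod))

lemma periodic_progressionNorm (hg : Periodic g q) (M : ℕ) :
    Periodic (progressionNorm q M g) (q.gcd M) := by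
  refine periodic_gcd_of_periodic (fun x => ?_) fun x => ?_
  · simp only [progressionNorm, add_right_comm x q, hg _]
  · have hshift := sum_range_add_one_of_periodic ((periodic_progression hg M x).comp (· ^ 2))
    simp only [comp_apply, mul_add, mul_one] at hshift
    simp only [progressionNorm, ← hshift, add_assoc, add_comm M]

lemma sum_sq_progressionNorm (hM : 0 < M) (hg : Periodic g q) :
    ∑ x ∈ range (q.gcd M), progressionNorm q M g x ^ 2 = ∑ x ∈ range q, g x ^ 2 := by
  set d := q.gcd M
  have hdM : d * (M / d) = M := Nat.mul_div_cancel' (Nat.gcd_dvd_right q M)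
  have hdq : d * (q / d) = q := Nat.mul_div_cancel' (Nat.gcd_dvd_left q M)
  have hMd : M / d ≠ 0 := by
    rintro h
    simp [h, hM.ne] at hdM
  have hmul : M * (q / d) = q * (M / d) := by
    rw [← hdM, mul_right_comm, hdq, hdM]
  refine nsmul_right_injective hMd ?_
  calc (M / d) • ∑ x ∈ range d, progressionNorm q M g x ^ 2
      = ∑ x ∈ range M, progressionNorm q M g x ^ 2 := by
        have hsum :=
          sum_range_mul_of_periodic ((periodic_progressionNorm hg M).comp (· ^ 2)) (M / d)
        rw [hdM] at hsum
        exact hsum.symm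
    _ = ∑ x ∈ range (q * (M / d)), g x ^ 2 := by
        simp only [sq_progressionNorm, ← hmul, sum_range_mul_eq_sum_sum _ M, d]
    _ = (M / d) • ∑ x ∈ range q, g x ^ 2 := sum_range_mul_of_periodic (hg.comp (· ^ 2)) _

lemma div_gcd_eq_of_dvd_prime_mul {p : ℕ} (hp : p.Prime) (hM : 0 < M) (hq : q ∣ p * M)
    (hqM : ¬ q ∣ M) : q / q.gcd M = p := by
  have hd : 0 < q.gcd M := Nat.gcd_pos_of_pos_right q hM
  have hcop : (q / q.gcd M).Coprime (M / q.gcd M) := Nat.coprime_div_gcd_div_gcd hd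
  have hdvd : q / q.gcd M ∣ p := by
    refine hcop.dvd_of_dvd_mul_right ?_
    rw [← Nat.mul_div_assoc _ (Nat.gcd_dvd_right q M)]
    exact Nat.div_dvd_div (Nat.gcd_dvd_left q M) hq
  refine ((Nat.dvd_prime hp).1 hdvd).resolve_left fun hone => hqM ?_
  exact Nat.gcd_eq_left_iff_dvd.1 (Nat.eq_of_dvd_of_div_eq_one (Nat.gcd_dvd_left q M) hone)

end Periodic

section Shearer

open Finset Function

lemma finset_lcm_gcd_eq_of_lcm_eq_mul {ι : Type*} {s : Finset ι} {q : ι → ℕ} {p M : ℕ}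
    (hp : 0 < p) (h : s.lcm q = p * M) : (s.lcm fun i => (q i).gcd M) = M := by
  refine Nat.dvd_antisymm (lcm_dvd fun i _ => Nat.gcd_dvd_right _ _)
    (Nat.dvd_of_mul_dvd_mul_left hp ?_)
  rw [← h]
  refine lcm_dvd fun i hi => ?_
  have hdvd : q i ∣ p * (q i).gcd M := by
    rw [← Nat.gcd_mul_left, ← h]
    exact Nat.dvd_gcd (dvd_mul_left _ _) (dvd_lcm hi)
  exact hdvd.trans (mul_dvd_mul_left p (dvd_lcm hi))

variable {ι : Type*} [Fintype ι]

-- Cauchy–Schwarz on the factors `i` and `j`; every other factor is bounded pointwise.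
lemma sum_prod_le_prod_of_sum_sq_le {κ : Type*} (s : Finset κ) {u : ι → κ → ℝ} {c : ι → ℝ}
    (hu : ∀ k t, 0 ≤ u k t) (hc : ∀ k, 0 ≤ c k) (huc : ∀ k t, u k t ≤ c k) {i j : ι} (hij : i ≠ j)
    (hi : ∑ t ∈ s, u i t ^ 2 ≤ c i ^ 2) (hj : ∑ t ∈ s, u j t ^ 2 ≤ c j ^ 2) :
    ∑ t ∈ s, ∏ k, u k t ≤ ∏ k, c k := by
  classical
  have hsplit : ∀ f : ι → ℝ, ∏ k, f k = f i * f j * ∏ k ∈ (univ.erase i).erase j, f k := by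
    intro f
    rw [mul_assoc, mul_prod_erase _ f (mem_erase.2 ⟨hij.symm, mem_univ j⟩),
      mul_prod_erase _ f (mem_univ i)]
  have hcauchy : ∑ t ∈ s, u i t * u j t ≤ c i * c j :=
    (Real.sum_mul_le_sqrt_mul_sqrt s (u i) (u j)).trans <|
      mul_le_mul (Real.sqrt_le_left (hc i) |>.2 hi) (Real.sqrt_le_left (hc j) |>.2 hj)
        (Real.sqrt_nonneg _) (hc i)
  simp only [hsplit]
  calc ∑ t ∈ s, u i t * u j t * ∏ k ∈ (univ.erase i).erase j, u k t
      ≤ ∑ t ∈ s, u i t * u j t * ∏ k ∈ (univ.erase i).erase j, c k := by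
        gcongr with t _ k _
        · exact mul_nonneg (hu i t) (hu j t)
        · exact fun k _ => hu k t
        · exact huc k t
    _ = (∑ t ∈ s, u i t * u j t) * ∏ k ∈ (univ.erase i).erase j, c k := (sum_mul ..).symm
    _ ≤ c i * c j * ∏ k ∈ (univ.erase i).erase j, c k :=
        mul_le_mul_of_nonneg_right hcauchy (prod_nonneg fun k _ => hc k)

lemma sum_prod_progression_le_prod_progressionNorm {q : ι → ℕ} {M p : ℕ} {g : ι → ℕ → ℝ}
    (hp : p.Prime) (hM : 0 < M) (hq : ∀ i, q i ∣ p * M) (hg : ∀ i x, 0 ≤ g i x)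
    (hper : ∀ i, Periodic (g i) (q i)) {i j : ι} (hij : i ≠ j) (hi : ¬ q i ∣ M) (hj : ¬ q j ∣ M)
    (x : ℕ) :
    ∑ t ∈ range p, ∏ k, g k (x + M * t) ≤ ∏ k, progressionNorm (q k) M (g k) x := by
  have hq0 : ∀ k, 0 < q k := fun k => Nat.pos_of_dvd_of_pos (hq k) (Nat.mul_pos hp.pos hM)
  have hfull : ∀ k, ¬ q k ∣ M →
      ∑ t ∈ range p, g k (x + M * t) ^ 2 ≤ progressionNorm (q k) M (g k) x ^ 2 := fun k hk => by
    rw [sq_progressionNorm, div_gcd_eq_of_dvd_prime_mul hp hM (hq k) hk]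
  exact sum_prod_le_prod_of_sum_sq_le _ (fun k t => hg k _)
    (fun k => progressionNorm_nonneg _ _ _ _) (fun k t => le_progressionNorm (hq0 k) (hper k) M x t)
    hij (hfull i hi) (hfull j hj)

variable [DecidableEq ι]

lemma exists_ne_not_dvd_of_lcm_erase_eq {q : ι → ℕ} {M : ℕ}
    (hq : ∀ i, (univ.erase i).lcm q = univ.lcm q) (hM : ¬ univ.lcm q ∣ M) :
    ∃ i j, i ≠ j ∧ ¬ q i ∣ M ∧ ¬ q j ∣ M := by
  have hex : ∀ s : Finset ι, s.lcm q = univ.lcm q → ∃ i ∈ s, ¬ q i ∣ M := by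
    intro s hs
    by_contra! h
    exact hM (hs ▸ lcm_dvd h)
  obtain ⟨i, -, hi⟩ := hex univ rfl
  obtain ⟨j, hj, hjM⟩ := hex _ (hq i)
  exact ⟨i, j, (ne_of_mem_erase hj).symm, hi, hjM⟩

-- Descent on the period: removing a prime `p` from `univ.lcm q = p * M` replaces each `g i` by its
-- `progressionNorm` along the step `M`. Two of the periods do not divide `M`, so one application of
-- Cauchy–Schwarz pays for the sum over `p` translates.
theorem sum_range_lcm_prod_le_prod_sqrt_of_periodic {q : ι → ℕ} {g : ι → ℕ → ℝ}
    (hq : ∀ i, (univ.erase i).lcm q = univ.lcm q) (hg : ∀ i x, 0 ≤ g i x)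
    (hper : ∀ i, Periodic (g i) (q i)) :
    ∑ x ∈ range (univ.lcm q), ∏ i, g i x ≤ ∏ i, √(∑ x ∈ range (q i), g i x ^ 2) := by
  induction hL : univ.lcm q using induction_on_primes generalizing q g with
  | zero => simpa using prod_nonneg fun i _ => Real.sqrt_nonneg _
  | one =>
    have hq1 : ∀ i, q i = 1 := fun i => Nat.dvd_one.1 (hL ▸ dvd_lcm (mem_univ i))
    simp [hq1, Real.sqrt_sq (hg _ _)]
  | prime_mul p M hp ih =>
    rcases M.eq_zero_or_pos with rfl | hM
    · simpa using prod_nonneg fun i _ => Real.sqrt_nonneg _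
    have hdvd : ∀ i, q i ∣ p * M := fun i => hL ▸ dvd_lcm (mem_univ i)
    have hLM : ¬ univ.lcm q ∣ M := by
      rw [hL]
      exact Nat.not_dvd_of_pos_of_lt hM (lt_mul_of_one_lt_left hM hp.one_lt)
    obtain ⟨i, j, hij, hi, hj⟩ := exists_ne_not_dvd_of_lcm_erase_eq hq hLM
    have hlcm : (univ.lcm fun i => (q i).gcd M) = M := finset_lcm_gcd_eq_of_lcm_eq_mul hp.pos hL
    have hlcm_erase : ∀ i, ((univ.erase i).lcm fun i => (q i).gcd M) = M := fun i =>
      finset_lcm_gcd_eq_of_lcm_eq_mul hp.pos ((hq i).trans hL)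
    calc ∑ x ∈ range (p * M), ∏ i, g i x
        = ∑ x ∈ range M, ∑ t ∈ range p, ∏ i, g i (x + M * t) := by
          rw [mul_comm, sum_range_mul_eq_sum_sum]
      _ ≤ ∑ x ∈ range M, ∏ i, progressionNorm (q i) M (g i) x :=
          sum_le_sum fun x _ =>
            sum_prod_progression_le_prod_progressionNorm hp hM hdvd hg hper hij hi hj x
      _ ≤ ∏ i, √(∑ x ∈ range ((q i).gcd M), progressionNorm (q i) M (g i) x ^ 2) :=
          ih (fun i => (hlcm_erase i).trans hlcm.symm)
            (fun i => progressionNorm_nonneg (q i) M (g i))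
            (fun i => periodic_progressionNorm (hper i) M) hlcm
      _ = ∏ i, √(∑ x ∈ range (q i), g i x ^ 2) := by
          simp only [sum_sq_progressionNorm hM (hper _)]

end Shearer

section Divisors

open Finset

lemma card_divisors_mul_le (a b : ℕ) :
    #(a * b).divisors ≤ #a.divisors * #b.divisors := by
  rw [Nat.divisors_mul]
  exact card_mul_le

lemma sum_sum_divisorsAntidiagonal_le {F : ℕ × ℕ → ℝ} (hF : ∀ x, 0 ≤ F x) (X : ℕ) :
    ∑ L ∈ Icc 1 X, ∑ x ∈ L.divisorsAntidiagonal, F x ≤ ∑ x ∈ Icc 1 X ×ˢ Icc 1 X, F x := by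
  have hfiber : ∀ L ∈ Icc 1 X, ∑ x ∈ L.divisorsAntidiagonal, F x =
      ∑ x ∈ Icc 1 X ×ˢ Icc 1 X with x.1 * x.2 = L, F x := fun L hL => by
    obtain ⟨hL1, hLX⟩ := mem_Icc.1 hL
    rw [Nat.divisorsAntidiagonal_eq_prod_filter_of_le (Nat.one_le_iff_ne_zero.1 hL1) hLX]
    rfl
  rw [sum_congr rfl hfiber]
  exact sum_fiberwise_le_sum_of_sum_fiber_nonneg fun _ _ => sum_nonneg fun x _ => hF x

lemma sum_mul_card_divisors_div_le {f : ℕ → ℝ} (hf : ∀ a, 0 ≤ f a)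
    (hmul : ∀ a b, f (a * b) ≤ f a * f b) (X : ℕ) :
    ∑ L ∈ Icc 1 X, f L * #L.divisors / L ≤ (∑ L ∈ Icc 1 X, f L / L) ^ 2 := by
  have hterm : ∀ L : ℕ, f L * #L.divisors / L ≤
      ∑ x ∈ L.divisorsAntidiagonal, f x.1 / x.1 * (f x.2 / x.2) := by
    intro L
    have hle : ∀ x ∈ L.divisorsAntidiagonal, f L / L ≤ f x.1 / x.1 * (f x.2 / x.2) := by
      intro x hx
      rw [← (Nat.mem_divisorsAntidiagonal.1 hx).1, div_mul_div_comm, Nat.cast_mul]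
      exact div_le_div_of_nonneg_right (hmul _ _) (by positivity)
    calc f L * #L.divisors / L = #L.divisorsAntidiagonal • (f L / L) := by
          rw [← Nat.map_div_right_divisors, card_map, nsmul_eq_mul]
          ring
      _ ≤ _ := card_nsmul_le_sum _ _ _ hle
  calc ∑ L ∈ Icc 1 X, f L * #L.divisors / L
      ≤ ∑ L ∈ Icc 1 X, ∑ x ∈ L.divisorsAntidiagonal, f x.1 / x.1 * (f x.2 / x.2) :=
        sum_le_sum fun L _ => hterm L
    _ ≤ ∑ x ∈ Icc 1 X ×ˢ Icc 1 X, f x.1 / x.1 * (f x.2 / x.2) :=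
        sum_sum_divisorsAntidiagonal_le
          (fun x => mul_nonneg (div_nonneg (hf _) x.1.cast_nonneg)
            (div_nonneg (hf _) x.2.cast_nonneg)) X
    _ = (∑ L ∈ Icc 1 X, f L / L) ^ 2 := by rw [sq, sum_mul_sum, sum_product]

lemma sum_card_divisors_pow_div_le (k X : ℕ) :
    ∑ L ∈ Icc 1 X, (#L.divisors : ℝ) ^ k / L ≤ (1 + Real.log X) ^ 2 ^ k := by
  induction k with
  | zero => simpa [harmonic_eq_sum_Icc] using harmonic_le_one_add_log X
  | succ k ih =>
    have hmul : ∀ a b : ℕ,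
        (#(a * b).divisors : ℝ) ^ k ≤ (#a.divisors : ℝ) ^ k * (#b.divisors : ℝ) ^ k := by
      intro a b
      rw [← mul_pow]
      gcongr
      exact_mod_cast card_divisors_mul_le a b
    calc ∑ L ∈ Icc 1 X, (#L.divisors : ℝ) ^ (k + 1) / L
        = ∑ L ∈ Icc 1 X, (#L.divisors : ℝ) ^ k * #L.divisors / L := by simp only [pow_succ]
      _ ≤ (∑ L ∈ Icc 1 X, (#L.divisors : ℝ) ^ k / L) ^ 2 :=
          sum_mul_card_divisors_div_le (fun _ => by positivity) hmul X
      _ ≤ ((1 + Real.log X) ^ 2 ^ k) ^ 2 := by gcongr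
      _ = (1 + Real.log X) ^ 2 ^ (k + 1) := by rw [← pow_mul, ← pow_succ]

variable {ι : Type*} [Fintype ι]

lemma lcm_mem_Icc_pow_card {q : ι → ℕ} {Q : ℕ} (hq : ∀ i, q i ∈ Icc 1 Q) :
    univ.lcm q ∈ Icc 1 (Q ^ Fintype.card ι) := by
  simp only [mem_Icc] at hq ⊢
  have hprod : 0 < ∏ i, q i := prod_pos fun i _ => (hq i).1
  have hdvd : univ.lcm q ∣ ∏ i, q i := lcm_dvd_prod univ q
  exact ⟨Nat.pos_of_dvd_of_pos hdvd hprod,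
    (Nat.le_of_dvd hprod hdvd).trans (prod_le_pow_card _ _ _ fun i _ => (hq i).2)⟩

lemma card_filter_lcm_eq_le (A : Finset (ι → ℕ)) {L : ℕ} (hL : L ≠ 0) :
    #{q ∈ A | univ.lcm q = L} ≤ #L.divisors ^ Fintype.card ι := by
  classical
  have hsub : {q ∈ A | univ.lcm q = L} ⊆ Fintype.piFinset fun _ => L.divisors := by
    intro q hq
    obtain ⟨-, rfl⟩ := mem_filter.1 hq
    exact Fintype.mem_piFinset.2 fun i => Nat.mem_divisors.2 ⟨dvd_lcm (mem_univ i), hL⟩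
  simpa using card_le_card hsub

lemma sum_inv_lcm_le [DecidableEq ι] (Q : ℕ) :
    ∑ q ∈ Fintype.piFinset fun _ : ι => Icc 1 Q, ((univ.lcm q : ℕ) : ℝ)⁻¹ ≤
      (1 + Fintype.card ι * Real.log Q) ^ 2 ^ Fintype.card ι := by
  set k := Fintype.card ι
  set A := Fintype.piFinset fun _ : ι => Icc 1 Q
  have hmaps : ∀ q ∈ A, univ.lcm q ∈ Icc 1 (Q ^ k) := fun q hq =>
    lcm_mem_Icc_pow_card (Fintype.mem_piFinset.1 hq)
  calc ∑ q ∈ A, ((univ.lcm q : ℕ) : ℝ)⁻¹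
      = ∑ L ∈ Icc 1 (Q ^ k), (#{q ∈ A | univ.lcm q = L} : ℝ) / L := by
        rw [← sum_fiberwise_of_maps_to' hmaps fun L : ℕ => (L : ℝ)⁻¹]
        simp only [sum_const, nsmul_eq_mul, div_eq_mul_inv]
    _ ≤ ∑ L ∈ Icc 1 (Q ^ k), (#L.divisors : ℝ) ^ k / L := by
        gcongr with L hL
        exact_mod_cast card_filter_lcm_eq_le A (Nat.one_le_iff_ne_zero.1 (mem_Icc.1 hL).1)
    _ ≤ (1 + Real.log (Q ^ k : ℕ)) ^ 2 ^ k := sum_card_divisors_pow_div_le _ _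
    _ = (1 + k * Real.log Q) ^ 2 ^ k := by rw [Nat.cast_pow, Real.log_pow]

end Divisors

section Characters

open Finset Function ComplexConjugate

/-- The character `x ↦ exp (2πix)` of `ℚ`, through which integrality of a rational is detected. -/
noncomputable def ratChar : AddChar ℚ ℂ :=
  Circle.coeHom.compAddChar (Real.fourierChar.compAddMonoidHom (Rat.castHom ℝ : ℚ →+ ℝ))

lemma ratChar_apply (x : ℚ) : ratChar x = Circle.exp (2 * Real.pi * x) := rfl

lemma ratChar_sum {ι : Type*} (s : Finset ι) (b : ι → ℚ) :
    ratChar (∑ i ∈ s, b i) = ∏ i ∈ s, ratChar (b i) :=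
  map_prod ratChar.toMonoidHom (fun i => Multiplicative.ofAdd (b i)) s

lemma conj_ratChar (x : ℚ) : conj (ratChar x) = ratChar (-x) := by
  rw [ratChar_apply, ratChar_apply, ← Circle.coe_inv_eq_conj, ← Circle.exp_neg]
  simp

lemma ratChar_eq_one_iff {x : ℚ} : ratChar x = 1 ↔ x.den = 1 := by
  rw [ratChar_apply, Circle.coe_eq_one, Circle.exp_eq_one, Rat.den_eq_one_iff]
  constructor
  · rintro ⟨k, hk⟩
    have hx : (x : ℝ) = k := by
      refine mul_left_cancel₀ Real.two_pi_pos.ne' ?_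
      rw [hk, mul_comm]
    have hx' : x = k := by exact_mod_cast hx
    rw [hx', Rat.num_intCast]
  · intro hx
    refine ⟨x.num, ?_⟩
    rw [mul_comm, ← Rat.cast_intCast, hx]

lemma ratChar_pow_eq_one {x : ℚ} {n : ℕ} (h : x.den ∣ n) : ratChar x ^ n = 1 := by
  obtain ⟨c, rfl⟩ := h
  have hint : x.den • x = x.num := by rw [nsmul_eq_mul, Rat.den_mul_eq_num]
  rw [pow_mul, ← AddChar.map_nsmul_eq_pow, hint, ratChar_eq_one_iff.2 (Rat.den_intCast _), one_pow]

lemma sum_range_ratChar_pow {x : ℚ} {n : ℕ} (h : x.den ∣ n) :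
    ∑ t ∈ range n, ratChar x ^ t = if x.den = 1 then (n : ℂ) else 0 := by
  split_ifs with hx
  · simp [ratChar_eq_one_iff.2 hx]
  · rw [geom_sum_eq (mt ratChar_eq_one_iff.1 hx), ratChar_pow_eq_one h, sub_self, zero_div]

/-- The exponential sum `t ↦ ∑ b ∈ S, exp (2πibt)` over a finite set of rationals, at the
nonnegative integers. -/
noncomputable def expSum (S : Finset ℚ) (t : ℕ) : ℂ := ∑ b ∈ S, ratChar b ^ t

lemma periodic_expSum {S : Finset ℚ} {q : ℕ} (hS : ∀ b ∈ S, b.den ∣ q) :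
    Periodic (expSum S) q := fun t =>
  sum_congr rfl fun b hb => by rw [pow_add, ratChar_pow_eq_one (hS b hb), mul_one]

lemma sq_norm_expSum (S : Finset ℚ) (t : ℕ) :
    ((‖expSum S t‖ ^ 2 : ℝ) : ℂ) = ∑ b ∈ S, ∑ c ∈ S, ratChar (b - c) ^ t := by
  rw [Complex.ofReal_pow, ← Complex.mul_conj', expSum, map_sum, sum_mul_sum]
  simp only [map_pow, conj_ratChar, ← mul_pow, ← AddChar.map_add_eq_mul, sub_eq_add_neg]

lemma den_sub_eq_one_iff_of_injOn_fract {S : Finset ℚ} (hinj : Set.InjOn Int.fract (S : Set ℚ))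
    {b c : ℚ} (hb : b ∈ S) (hc : c ∈ S) : (b - c).den = 1 ↔ b = c := by
  refine ⟨fun h => hinj hb hc (Int.fract_eq_fract.2 ⟨(b - c).num, ?_⟩), fun h => by simp [h]⟩
  exact ((Rat.den_eq_one_iff _).1 h).symm

lemma sum_sq_norm_expSum {S : Finset ℚ} {q : ℕ} (hS : ∀ b ∈ S, b.den ∣ q)
    (hinj : Set.InjOn Int.fract (S : Set ℚ)) :
    ∑ t ∈ range q, ‖expSum S t‖ ^ 2 = q * #S := by
  have hden : ∀ b ∈ S, ∀ c ∈ S, (b - c).den ∣ q := fun b hb c hc =>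
    (Rat.sub_den_dvd_lcm b c).trans (Nat.lcm_dvd (hS b hb) (hS c hc))
  have horth : ∀ b ∈ S, ∀ c ∈ S,
      ∑ t ∈ range q, ratChar (b - c) ^ t = if b = c then (q : ℂ) else 0 := fun b hb c hc => by
    rw [sum_range_ratChar_pow (hden b hb c hc)]
    simp only [den_sub_eq_one_iff_of_injOn_fract hinj hb hc]
  have hcomplex : ((∑ t ∈ range q, ‖expSum S t‖ ^ 2 : ℝ) : ℂ) = q * #S :=
    calc ((∑ t ∈ range q, ‖expSum S t‖ ^ 2 : ℝ) : ℂ)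
        = ∑ b ∈ S, ∑ c ∈ S, ∑ t ∈ range q, ratChar (b - c) ^ t := by
          rw [Complex.ofReal_sum, sum_congr rfl fun t _ => sq_norm_expSum S t, sum_comm]
          exact sum_congr rfl fun b _ => sum_comm
      _ = ∑ b ∈ S, ∑ c ∈ S, if b = c then (q : ℂ) else 0 :=
          sum_congr rfl fun b hb => sum_congr rfl fun c hc => horth b hb c hc
      _ = q * #S := by simp [mul_comm]
  exact_mod_cast hcomplex

variable {ι : Type*} [Fintype ι] [DecidableEq ι]

lemma sum_range_prod_expSum {S : ι → Finset ℚ} {L : ℕ} (hS : ∀ i, ∀ b ∈ S i, b.den ∣ L) :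
    ∑ t ∈ range L, ∏ i, expSum (S i) t =
      L * #{b ∈ Fintype.piFinset S | (∑ i, b i).den = 1} := by
  have hden : ∀ b ∈ Fintype.piFinset S, (∑ i, b i).den ∣ L := fun b hb =>
    (Rat.den_sum_dvd_lcm_den univ b).trans <|
      lcm_dvd fun i _ => hS i (b i) (Fintype.mem_piFinset.1 hb i)
  calc ∑ t ∈ range L, ∏ i, expSum (S i) t
      = ∑ b ∈ Fintype.piFinset S, ∑ t ∈ range L, ratChar (∑ i, b i) ^ t := by
        simp only [expSum, prod_univ_sum, prod_pow, ← ratChar_sum]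
        exact sum_comm
    _ = ∑ b ∈ Fintype.piFinset S, if (∑ i, b i).den = 1 then (L : ℂ) else 0 :=
        sum_congr rfl fun b hb => sum_range_ratChar_pow (hden b hb)
    _ = L * #{b ∈ Fintype.piFinset S | (∑ i, b i).den = 1} := by
        rw [← sum_filter, sum_const, nsmul_eq_mul, mul_comm]

end Characters

section Counting

open Finset

variable {ι : Type*} [Fintype ι] [DecidableEq ι]

lemma den_dvd_lcm_erase_of_den_sum_eq_one {b : ι → ℚ} (hb : (∑ i, b i).den = 1) (i : ι) :
    (b i).den ∣ (univ.erase i).lcm fun j => (b j).den := by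
  have hbi : b i = ∑ j, b j - ∑ j ∈ univ.erase i, b j := by
    rw [← add_sum_erase _ _ (mem_univ i), add_sub_cancel_right]
  calc (b i).den ∣ (∑ j, b j).den.lcm (∑ j ∈ univ.erase i, b j).den := by
        conv_lhs => rw [hbi]
        exact Rat.sub_den_dvd_lcm _ _
    _ = (∑ j ∈ univ.erase i, b j).den := by rw [hb, Nat.lcm_one_left]
    _ ∣ (univ.erase i).lcm fun j => (b j).den := Rat.den_sum_dvd_lcm_den _ _

lemma lcm_erase_den_eq_of_den_sum_eq_one {b : ι → ℚ} (hb : (∑ i, b i).den = 1) (i : ι) :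
    ((univ.erase i).lcm fun j => (b j).den) = univ.lcm fun j => (b j).den := by
  rw [← insert_erase (mem_univ i), lcm_insert, erase_insert_eq_erase, erase_idem]
  exact (Nat.lcm_eq_right (den_dvd_lcm_erase_of_den_sum_eq_one hb i)).symm

lemma lcm_mul_card_den_sum_eq_one_le {S : ι → Finset ℚ} {q : ι → ℕ}
    (hS : ∀ i, ∀ b ∈ S i, b.den ∣ q i) (hinj : ∀ i, Set.InjOn Int.fract (S i : Set ℚ))
    (hq : ∀ i, (univ.erase i).lcm q = univ.lcm q) :
    ((univ.lcm q : ℕ) : ℝ) * #{b ∈ Fintype.piFinset S | (∑ i, b i).den = 1} ≤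
      ∏ i, √(q i * #(S i)) := by
  have hdvd : ∀ i, ∀ b ∈ S i, b.den ∣ univ.lcm q := fun i b hb =>
    (hS i b hb).trans (dvd_lcm (mem_univ i))
  calc ((univ.lcm q : ℕ) : ℝ) * #{b ∈ Fintype.piFinset S | (∑ i, b i).den = 1}
      = ‖∑ t ∈ range (univ.lcm q), ∏ i, expSum (S i) t‖ := by
        rw [sum_range_prod_expSum hdvd, norm_mul, Complex.norm_natCast, Complex.norm_natCast]
    _ ≤ ∑ t ∈ range (univ.lcm q), ‖∏ i, expSum (S i) t‖ := norm_sum_le _ _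
    _ = ∑ t ∈ range (univ.lcm q), ∏ i, ‖expSum (S i) t‖ := by simp only [norm_prod]
    _ ≤ ∏ i, √(∑ t ∈ range (q i), ‖expSum (S i) t‖ ^ 2) :=
        sum_range_lcm_prod_le_prod_sqrt_of_periodic hq (fun _ _ => norm_nonneg _)
          fun i => (periodic_expSum (hS i)).comp norm
    _ = ∏ i, √(q i * #(S i)) := by
        simp only [fun i => sum_sq_norm_expSum (hS i) (hinj i)]

lemma card_den_sum_eq_one_le_of_den_eq {S : ι → Finset ℚ} {q : ι → ℕ}
    (hS : ∀ i, ∀ b ∈ S i, b.den = q i) (hinj : ∀ i, Set.InjOn Int.fract (S i : Set ℚ)) :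
    (#{b ∈ Fintype.piFinset S | (∑ i, b i).den = 1} : ℝ) ≤
      (∏ i, √(q i * #(S i))) * ((univ.lcm q : ℕ) : ℝ)⁻¹ := by
  rcases eq_empty_or_nonempty {b ∈ Fintype.piFinset S | (∑ i, b i).den = 1} with h | ⟨b, hb⟩
  · rw [h, card_empty, Nat.cast_zero]
    exact mul_nonneg (prod_nonneg fun i _ => Real.sqrt_nonneg _) (inv_nonneg.2 (Nat.cast_nonneg _))
  obtain ⟨hbS, hsum⟩ := mem_filter.1 hb
  have hden : (fun i => (b i).den) = q :=
    funext fun i => hS i _ (Fintype.mem_piFinset.1 hbS i)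
  have hL : univ.lcm q ≠ 0 := fun h => by
    obtain ⟨i, -, hi⟩ := lcm_eq_zero_iff.1 h
    exact (b i).den_nz (congrFun hden i ▸ hi)
  have hq : ∀ i, (univ.erase i).lcm q = univ.lcm q := fun i =>
    hden ▸ lcm_erase_den_eq_of_den_sum_eq_one hsum i
  rw [← div_eq_mul_inv, le_div_iff₀' (Nat.cast_pos.2 (Nat.pos_of_ne_zero hL))]
  exact lcm_mul_card_den_sum_eq_one_le (fun i b hb => (hS i b hb).dvd) hinj hq

/-- `S` is a set of rationals, distinct modulo `1` and with denominators at most `Q`, that has at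
most `n` elements of each given denominator. -/
structure SparseDenominators (Q n : ℕ) (S : Finset ℚ) : Prop where
  injOn_fract : Set.InjOn Int.fract (S : Set ℚ)
  den_le : ∀ b ∈ S, b.den ≤ Q
  card_den_eq_le : ∀ q, #{b ∈ S | b.den = q} ≤ n

open scoped Pointwise in
lemma SparseDenominators.neg {Q n : ℕ} {S : Finset ℚ} (hS : SparseDenominators Q n S) :
    SparseDenominators Q n (-S) where
  injOn_fract := by
    intro b hb c hc hbc
    rw [coe_neg, Set.mem_neg] at hb hc
    obtain ⟨k, hk⟩ := Int.fract_eq_fract.1 hbc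
    refine neg_injective (hS.injOn_fract hb hc (Int.fract_eq_fract.2 ⟨-k, ?_⟩))
    rw [Int.cast_neg, ← hk]
    ring
  den_le b hb := by simpa using hS.den_le (-b) (mem_neg'.1 hb)
  card_den_eq_le q := by
    have hneg : {b ∈ -S | b.den = q} = -{b ∈ S | b.den = q} := by
      ext b
      simp
    rw [hneg, card_neg]
    exact hS.card_den_eq_le q

lemma card_den_sum_eq_one_le_of_den_eq_of_sparse {S : ι → Finset ℚ} {Q n : ℕ}
    (hS : ∀ i, SparseDenominators Q n (S i)) {q : ι → ℕ} (hq : ∀ i, q i ≤ Q) :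
    (#{b ∈ Fintype.piFinset fun i => {c ∈ S i | c.den = q i} | (∑ i, b i).den = 1} : ℝ) ≤
      √(Q * n) ^ Fintype.card ι * ((univ.lcm q : ℕ) : ℝ)⁻¹ :=
  calc (#{b ∈ Fintype.piFinset fun i => {c ∈ S i | c.den = q i} | (∑ i, b i).den = 1} : ℝ)
      ≤ (∏ i, √(q i * #{c ∈ S i | c.den = q i})) * ((univ.lcm q : ℕ) : ℝ)⁻¹ :=
        card_den_sum_eq_one_le_of_den_eq (fun i b hb => (mem_filter.1 hb).2)
          fun i => (hS i).injOn_fract.mono (coe_subset.2 (filter_subset _ _))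
    _ ≤ (∏ _i : ι, √(Q * n)) * ((univ.lcm q : ℕ) : ℝ)⁻¹ := by
        gcongr with i
        · exact hq i
        · exact (hS i).card_den_eq_le _
    _ = √(Q * n) ^ Fintype.card ι * ((univ.lcm q : ℕ) : ℝ)⁻¹ := by rw [prod_const, card_univ]

lemma card_den_sum_eq_one_le_of_sparse {S : ι → Finset ℚ} {Q n : ℕ}
    (hS : ∀ i, SparseDenominators Q n (S i)) :
    (#{b ∈ Fintype.piFinset S | (∑ i, b i).den = 1} : ℝ) ≤
      √(Q * n) ^ Fintype.card ι * (1 + Fintype.card ι * Real.log Q) ^ 2 ^ Fintype.card ι := by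
  set T := {b ∈ Fintype.piFinset S | (∑ i, b i).den = 1}
  set A := Fintype.piFinset fun _ : ι => Icc 1 Q
  have hmaps : ∀ b ∈ T, (fun i => (b i).den) ∈ A := fun b hb =>
    Fintype.mem_piFinset.2 fun i => mem_Icc.2 ⟨(b i).den_pos,
      (hS i).den_le _ (Fintype.mem_piFinset.1 (mem_filter.1 hb).1 i)⟩
  have hfiber : ∀ q : ι → ℕ, {b ∈ T | (fun i => (b i).den) = q} =
      {b ∈ Fintype.piFinset fun i => {c ∈ S i | c.den = q i} | (∑ i, b i).den = 1} := by
    intro q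
    ext b
    simp only [T, mem_filter, Fintype.mem_piFinset, funext_iff, forall_and, and_right_comm]
  calc (#T : ℝ) = ∑ q ∈ A,
        (#{b ∈ Fintype.piFinset fun i => {c ∈ S i | c.den = q i} | (∑ i, b i).den = 1} : ℝ) := by
        rw [card_eq_sum_card_fiberwise hmaps, Nat.cast_sum]
        simp only [hfiber]
    _ ≤ ∑ q ∈ A, √(Q * n) ^ Fintype.card ι * ((univ.lcm q : ℕ) : ℝ)⁻¹ :=
        sum_le_sum fun q hq => card_den_sum_eq_one_le_of_den_eq_of_sparse hS fun i =>
          (mem_Icc.1 (Fintype.mem_piFinset.1 hq i)).2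
    _ ≤ √(Q * n) ^ Fintype.card ι * (1 + Fintype.card ι * Real.log Q) ^ 2 ^ Fintype.card ι := by
        rw [← mul_sum]
        gcongr
        exact sum_inv_lcm_le Q

open scoped Pointwise in
lemma addEnergy_le_card_den_sum_eq_one (m : ℕ) (B : Finset ℚ) :
    addEnergy m B ≤ #{b ∈ Fintype.piFinset
      (Sum.elim (fun _ => B) fun _ => -B : Fin m ⊕ Fin m → Finset ℚ) | (∑ i, b i).den = 1} := by
  refine card_le_card_of_injOn (fun x => Sum.elim x.1 (-x.2)) ?_ ?_
  · rintro ⟨x, y⟩ hxy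
    obtain ⟨hB, hsum⟩ := mem_filter.1 hxy
    simp only [mem_product, Fintype.mem_piFinset] at hB
    refine mem_filter.2 ⟨Fintype.mem_piFinset.2 ?_, by simp [hsum]⟩
    rintro (i | i)
    · exact hB.1 i
    · simpa using hB.2 i
  · rintro ⟨x, y⟩ - ⟨x', y'⟩ - h
    exact Prod.ext (funext fun i => congrFun h (Sum.inl i))
      (neg_injective (funext fun i => congrFun h (Sum.inr i)))

open scoped Pointwise in
lemma SparseDenominators.addEnergy_le {Q n : ℕ} {B : Finset ℚ} (hB : SparseDenominators Q n B)
    (m : ℕ) : (addEnergy m B : ℝ) ≤ (1 + 2 * m * Real.log Q) ^ 4 ^ m * ((Q : ℝ) * n) ^ m := by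
  have hcard : Fintype.card (Fin m ⊕ Fin m) = 2 * m := by simp [two_mul]
  have hsparse : ∀ i, SparseDenominators Q n
      ((Sum.elim (fun _ => B) fun _ => -B : Fin m ⊕ Fin m → Finset ℚ) i) :=
    Sum.rec (fun _ => hB) fun _ => hB.neg
  calc (addEnergy m B : ℝ) ≤ _ := by exact_mod_cast addEnergy_le_card_den_sum_eq_one m B
    _ ≤ _ := card_den_sum_eq_one_le_of_sparse hsparse
    _ = (1 + 2 * m * Real.log Q) ^ 4 ^ m * ((Q : ℝ) * n) ^ m := by
      rw [hcard, pow_mul √_, Real.sq_sqrt (by positivity), pow_mul 2 2 m, Nat.cast_mul, mul_comm]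
      norm_num

end Counting

section FareyFractions

open Finset

lemma injOn_fract_Ioc {R : Type*} [CommRing R] [LinearOrder R] [IsStrictOrderedRing R] [FloorRing R]
    (a : R) : Set.InjOn Int.fract (Set.Ioc a (a + 1)) := by
  intro x hx y hy hxy
  obtain ⟨k, hk⟩ := Int.fract_eq_fract.1 hxy
  have hlt : |(k : R)| < 1 := by
    rw [← hk, abs_sub_lt_iff]
    constructor
    · linarith [hx.2, hy.1]
    · linarith [hx.1, hy.2]
  have hk0 : k = 0 := Int.abs_lt_one_iff.1 (by exact_mod_cast hlt)
  rwa [hk0, Int.cast_zero, sub_eq_zero] at hk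

lemma den_of_mem_Qeq {q : ℕ} {b : ℚ} (hb : b ∈ Qeq q) : b.den = q := by
  simp only [Qeq, mem_image, mem_filter, mem_Icc] at hb
  obtain ⟨a, ⟨⟨ha, haq⟩, hgcd⟩, rfl⟩ := hb
  have hden : (((a : ℤ) / (q : ℤ) : ℚ).den : ℤ) = q :=
    Rat.den_div_eq_of_coprime (by omega) (by simpa using hgcd)
  simpa only [Int.cast_natCast, Nat.cast_inj] using hden

lemma mem_Ioc_of_mem_Qeq {q : ℕ} {b : ℚ} (hb : b ∈ Qeq q) : b ∈ Set.Ioc 0 1 := by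
  simp only [Qeq, mem_image, mem_filter, mem_Icc] at hb
  obtain ⟨a, ⟨⟨ha, haq⟩, -⟩, rfl⟩ := hb
  have ha0 : (0 : ℚ) < a := Nat.cast_pos.2 ha
  have hq0 : (0 : ℚ) < q := Nat.cast_pos.2 (ha.trans haq)
  exact ⟨div_pos ha0 hq0, (div_le_one hq0).2 (Nat.cast_le.2 haq)⟩

lemma den_le_and_mem_Qeq_den_of_mem_Qle {Q : ℕ} {b : ℚ} (hb : b ∈ Qle Q) :
    b.den ≤ Q ∧ b ∈ Qeq b.den := by
  obtain ⟨q, hq, hbq⟩ := mem_biUnion.1 hb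
  obtain rfl := den_of_mem_Qeq hbq
  exact ⟨(mem_Icc.1 hq).2, hbq⟩

lemma sparseDenominators_of_subset_Qle {Q n : ℕ} {B : Finset ℚ} (hB : B ⊆ Qle Q)
    (hn : ∀ q, 1 ≤ q → q ≤ Q → #(B ∩ Qeq q) ≤ n) : SparseDenominators Q n B where
  injOn_fract := by
    refine (injOn_fract_Ioc (0 : ℚ)).mono fun b hb => ?_
    rw [zero_add]
    exact mem_Ioc_of_mem_Qeq (den_le_and_mem_Qeq_den_of_mem_Qle (hB hb)).2
  den_le b hb := (den_le_and_mem_Qeq_den_of_mem_Qle (hB hb)).1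
  card_den_eq_le q := by
    have hsub : {b ∈ B | b.den = q} ⊆ B ∩ Qeq q := by
      intro b hb
      obtain ⟨hbB, rfl⟩ := mem_filter.1 hb
      exact mem_inter.2 ⟨hbB, (den_le_and_mem_Qeq_den_of_mem_Qle (hB hbB)).2⟩
    rcases eq_empty_or_nonempty {b ∈ B | b.den = q} with h | ⟨b, hb⟩
    · simp [h]
    · obtain ⟨hbB, hbq⟩ := mem_filter.1 hb
      exact (card_le_card hsub).trans <| hn q (hbq ▸ b.den_pos) <|
        hbq ▸ (den_le_and_mem_Qeq_den_of_mem_Qle (hB hbB)).1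

end FareyFractions

lemma le_log_mul {Q m : ℕ} (hQ : 2 ≤ Q) (hm : 2 ≤ m) : 1.38 ≤ Real.log ((m : ℝ) * Q) :=
  calc (1.38 : ℝ) ≤ 2 * Real.log 2 := by linarith [Real.log_two_gt_d9]
    _ = Real.log (2 * 2) := by rw [Real.log_mul two_ne_zero two_ne_zero, two_mul]
    _ ≤ Real.log (m * Q) := by
      gcongr
      · exact_mod_cast hm
      · exact_mod_cast hQ

lemma one_add_mul_log_le_log_pow {Q m : ℕ} (hQ : 2 ≤ Q) (hm : 2 ≤ m) :
    1 + 2 * m * Real.log Q ≤ Real.log ((m : ℝ) * Q) ^ (4 * m + 1) := by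
  set l := Real.log ((m : ℝ) * Q)
  have hl : 1.38 ≤ l := le_log_mul hQ hm
  have hl1 : 1 ≤ l := by linarith
  have hl4 : 1 + 2 ≤ l ^ 4 :=
    calc (1 + 2 : ℝ) ≤ 1.38 ^ 4 := by norm_num
      _ ≤ l ^ 4 := by gcongr
  have hlogQ : Real.log Q ≤ l := by
    refine Real.log_le_log (Nat.cast_pos.2 (by omega)) ?_
    exact le_mul_of_one_le_left Q.cast_nonneg (Nat.one_le_cast.2 (by omega))
  have hbernoulli : 1 + (m : ℝ) * 2 ≤ (1 + 2) ^ m := one_add_mul_le_pow (by norm_num) m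
  calc 1 + 2 * m * Real.log Q ≤ l + 2 * m * l := by gcongr
    _ = (1 + m * 2) * l := by ring
    _ ≤ (1 + 2) ^ m * l := by gcongr
    _ ≤ (l ^ 4) ^ m * l := by gcongr
    _ = l ^ (4 * m + 1) := by rw [← pow_mul, ← pow_succ]

lemma four_mul_add_one_mul_four_pow_le (m : ℕ) : (4 * m + 1) * 4 ^ m ≤ 20 ^ m := by
  have hbernoulli : (1 : ℤ) + m * 4 ≤ (1 + 4) ^ m := one_add_mul_le_pow (by norm_num) m
  calc (4 * m + 1) * 4 ^ m ≤ 5 ^ m * 4 ^ m := by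
        gcongr
        rw [add_comm, mul_comm]
        exact_mod_cast hbernoulli
    _ = 20 ^ m := (mul_pow 5 4 m).symm

theorem statement_1 :
    ∃ C > (0 : ℝ), ∀ Q m n : ℕ, 2 ≤ Q → 2 ≤ m → 1 ≤ n →
      ∀ B : Finset ℚ, B ⊆ Qle Q →
        (∀ q : ℕ, 1 ≤ q → q ≤ Q → (B ∩ Qeq q).card ≤ n) →
        (addEnergy m B : ℝ) ≤ Real.log ((m : ℝ) * Q) ^ (C ^ m) * ((Q : ℝ) * n) ^ m := by
  refine ⟨20, by norm_num, fun Q m n hQ hm _ B hB hBn => ?_⟩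
  have hsparse : SparseDenominators Q n B := sparseDenominators_of_subset_Qle hB hBn
  have hlog : 1 ≤ Real.log ((m : ℝ) * Q) := le_trans (by norm_num) (le_log_mul hQ hm)
  calc (addEnergy m B : ℝ)
      ≤ (1 + 2 * m * Real.log Q) ^ 4 ^ m * ((Q : ℝ) * n) ^ m := hsparse.addEnergy_le m
    _ ≤ (Real.log ((m : ℝ) * Q) ^ (4 * m + 1)) ^ 4 ^ m * ((Q : ℝ) * n) ^ m := by
        gcongr
        exact one_add_mul_log_le_log_pow hQ hm
    _ = Real.log ((m : ℝ) * Q) ^ ((4 * m + 1) * 4 ^ m) * ((Q : ℝ) * n) ^ m := by rw [← pow_mul]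
    _ ≤ Real.log ((m : ℝ) * Q) ^ 20 ^ m * ((Q : ℝ) * n) ^ m := by
        gcongr
        exact four_mul_add_one_mul_four_pow_le m
    _ = Real.log ((m : ℝ) * Q) ^ (20 : ℝ) ^ m * ((Q : ℝ) * n) ^ m := by
        rw [← Real.rpow_natCast]
        norm_num
end

section
/- There exists an absolute constant C > 0 such that the following holds. Let K ≥ 1, L ≥ 2 and n ≥ 1 be integers, let A be a finite subset of Q_{≤K}, let 𝒞 be a finite set of non-zero rationals, and let B ⊆ Q_{≤L} satisfy |B ∩ Q_{=ℓ}| ≤ n for every 1 ≤ ℓ ≤ L. Let ω : ℕ → ℝ_{≥0} be sub-multiplicative. Then the number of triples, counted with weight ω(k), of reduced fractions a/k ∈ A, b/ℓ ∈ B, c/q ∈ 𝒞 satisfying a/k − b/ℓ = c/q, is at most C · ( L·n·(log L)·M_log(ω·τ₃; L) · Σ'_{c/q ∈ 𝒞} ω(q)·τ₃(q)² · Σ'_{a/k ∈ A} ω(k) )^{1/2}, where Σ' indicates that each fraction is written in lowest terms. -/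
/-- The ternary divisor function `τ₃(n) = #{(a,b,c) ∈ ℕ³ : abc = n}`. -/
def tau3 (n : ℕ) : ℕ :=
  ((Finset.Icc 1 n ×ˢ Finset.Icc 1 n ×ˢ Finset.Icc 1 n).filter
    fun p => p.1 * p.2.1 * p.2.2 = n).card

/-- The logarithmic maximal average `M_log(ω; X) = max_{2 ≤ x ≤ X} (1/log x) ∑_{n ≤ x} ω(n)/n`. -/
noncomputable def MlogAvg (w : ℕ → ℝ) (X : ℕ) : ℝ :=
  ⨆ x ∈ Finset.Icc 2 X, (∑ n ∈ Finset.Icc 1 x, w n / (n : ℝ)) / Real.log x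

/-- `ω` is sub-multiplicative: `ω(ab) ≤ ω(a)ω(b)` and `ω(d) ≤ ω(n)` whenever `d ∣ n`. -/
def SubMult (w : ℕ → ℝ) : Prop :=
  (∀ a b : ℕ, 0 < a → 0 < b → w (a * b) ≤ w a * w b) ∧
    ∀ d n : ℕ, 0 < n → d ∣ n → w d ≤ w n

/-! Write the denominators of `x`, `y`, `x - y` as `gst`, `gsu`, `gtu` with `s, t, u` pairwise
coprime, and fix `(g, s, t, u)`. If `N` pairs in `A × B` have difference in `D`, then by
Cauchy–Schwarz `N²` is at most `#D` times the number of solutions of `x - y = x' - y' ∈ D`. Once `x`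
and `y'` are fixed, any two admissible values of `y` differ by a multiple of
`1 / gcd(gst, gsu, gtu) = 1 / g` of size less than one, so there are at most `g` of them and
`N² ≤ g · #A · #B · #D`. A second Cauchy–Schwarz inequality sums this over `(g, s, t, u)`: a given
`k` is `gst` in at most `τ₃(k)` ways, each leaving at most `L / (gs)` values of `u`, and a given `q`
is `gtu` in at most `τ₃(q)` ways, each leaving a sum over `s ≤ L`. -/

open Finset

theorem sum_le_sum_of_injOn {ι κ M : Type*} [AddCommMonoid M] [PartialOrder M]
    [IsOrderedAddMonoid M] {S : Finset ι} {T : Finset κ} {f : ι → M} {h : κ → M} (e : ι → κ)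
    (hST : Set.MapsTo e S T) (he : Set.InjOn e S) (hh : ∀ j ∈ T, 0 ≤ h j)
    (hfh : ∀ i ∈ S, f i ≤ h (e i)) : ∑ i ∈ S, f i ≤ ∑ j ∈ T, h j := by
  classical
  calc ∑ i ∈ S, f i ≤ ∑ i ∈ S, h (e i) := sum_le_sum hfh
    _ = ∑ j ∈ S.image e, h j := (sum_image he).symm
    _ ≤ ∑ j ∈ T, h j :=
      sum_le_sum_of_subset_of_nonneg (image_subset_iff.2 hST) fun j hj _ => hh j hj

theorem sum_card_filter_eq_mul {ι κ γ R : Type*} [DecidableEq γ] [NonAssocSemiring R]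
    (P : Finset ι) (D : Finset κ) (a : κ → γ) (b : ι → γ) (h : ι → R) :
    ∑ p ∈ P, (#{z ∈ D | a z = b p} : R) * h p = ∑ z ∈ D, ∑ p ∈ P with b p = a z, h p := by
  simp only [sum_filter]
  rw [sum_comm]
  refine sum_congr rfl fun p _ => ?_
  simp only [eq_comm (a := b p)]
  rw [← sum_filter, sum_const, nsmul_eq_mul]

theorem sq_card_le_card_mul_card_filter_eq {α β : Type*} [DecidableEq β] {S : Finset α}
    {D : Finset β} {f : α → β} (hf : Set.MapsTo f S D) :
    #S ^ 2 ≤ #D * #{p ∈ S ×ˢ S | f p.1 = f p.2} := by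
  have card_pairs : #{p ∈ S ×ˢ S | f p.1 = f p.2} = ∑ z ∈ D, #{a ∈ S | f a = z} ^ 2 := by
    rw [card_eq_sum_card_fiberwise (f := fun p => f p.1) (t := D)
      fun p hp => hf (mem_product.1 (mem_filter.1 hp).1).1]
    refine sum_congr rfl fun z _ => ?_
    rw [sq, ← card_product]
    congr 1
    ext p
    simp only [mem_filter, mem_product]
    grind
  rw [card_eq_sum_card_fiberwise hf, card_pairs]
  exact sq_sum_le_card_mul_sum_sq

theorem exists_mul_eq_of_mul_eq_mul {M : Type*} [CommMonoidWithZero M] [IsLeftCancelMulZero M]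
    [DecompositionMonoid M] {x y a b : M} (hx : x ≠ 0) (h : x * y = a * b) :
    ∃ x₁ x₂ y₁ y₂ : M, x = x₁ * x₂ ∧ y = y₁ * y₂ ∧ a = x₁ * y₁ ∧ b = x₂ * y₂ := by
  obtain ⟨x₁, x₂, ⟨y₁, rfl⟩, ⟨y₂, rfl⟩, rfl⟩ :=
    exists_dvd_and_dvd_of_dvd_mul (⟨y, h.symm⟩ : x ∣ a * b)
  exact ⟨x₁, x₂, y₁, y₂, rfl, mul_left_cancel₀ hx (h.trans (mul_mul_mul_comm ..)), rfl, rfl⟩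

/-- The ordered factorizations of `n` into three positive factors, counted by `tau3 n`. -/
def tripleFactorizations (n : ℕ) : Finset (ℕ × ℕ × ℕ) :=
  {p ∈ Icc 1 n ×ˢ Icc 1 n ×ˢ Icc 1 n | p.1 * p.2.1 * p.2.2 = n}

theorem card_tripleFactorizations (n : ℕ) : #(tripleFactorizations n) = tau3 n := rfl

theorem mem_tripleFactorizations {n a b c : ℕ} :
    (a, b, c) ∈ tripleFactorizations n ↔ a * b * c = n ∧ n ≠ 0 := by
  simp only [tripleFactorizations, mem_filter, mem_product, mem_Icc]
  constructor
  · rintro ⟨⟨ha, hb, hc⟩, rfl⟩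
    exact ⟨rfl, by have := ha.1; have := hb.1; have := hc.1; positivity⟩
  · rintro ⟨habc, hn⟩
    have bounds {d : ℕ} (hd : d ∣ n) : 1 ≤ d ∧ d ≤ n :=
      ⟨Nat.pos_of_dvd_of_pos hd hn.bot_lt, Nat.le_of_dvd hn.bot_lt hd⟩
    exact ⟨⟨bounds ⟨b * c, by rw [← habc, mul_assoc]⟩, bounds ⟨a * c, by rw [← habc]; ring⟩,
      bounds ⟨a * b, by rw [← habc, mul_comm]⟩⟩, habc⟩

theorem tau3_pos {n : ℕ} (hn : n ≠ 0) : 0 < tau3 n := by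
  rw [← card_tripleFactorizations, card_pos]
  exact ⟨(1, 1, n), mem_tripleFactorizations.2 ⟨by simp, hn⟩⟩

theorem tau3_mul_le {a b : ℕ} (ha : a ≠ 0) (hb : b ≠ 0) : tau3 (a * b) ≤ tau3 a * tau3 b := by
  simp only [← card_tripleFactorizations]
  rw [← card_product]
  refine card_le_card_of_surjOn
    (fun p => (p.1.1 * p.2.1, p.1.2.1 * p.2.2.1, p.1.2.2 * p.2.2.2)) ?_
  rintro ⟨x, y, z⟩ hxyz
  obtain ⟨hxyz, hab⟩ := mem_tripleFactorizations.1 hxyz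
  have hxy : x * y ≠ 0 := left_ne_zero_of_mul (hxyz ▸ hab)
  obtain ⟨d₁, d₂, z₁, z₂, hd, rfl, rfl, rfl⟩ := exists_mul_eq_of_mul_eq_mul hxy hxyz
  obtain ⟨x₁, x₂, y₁, y₂, rfl, rfl, rfl, rfl⟩ :=
    exists_mul_eq_of_mul_eq_mul (left_ne_zero_of_mul hxy) hd
  exact ⟨((x₁, y₁, z₁), (x₂, y₂, z₂)), mem_product.2
    ⟨mem_tripleFactorizations.2 ⟨rfl, ha⟩, mem_tripleFactorizations.2 ⟨rfl, hb⟩⟩, rfl⟩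

theorem tau3_le_of_dvd {d n : ℕ} (hn : n ≠ 0) (h : d ∣ n) : tau3 d ≤ tau3 n := by
  obtain ⟨e, rfl⟩ := h
  simp only [← card_tripleFactorizations]
  refine card_le_card_of_injOn (fun p => (p.1, p.2.1, p.2.2 * e)) ?_ ?_
  · rintro ⟨a, b, c⟩ hp
    rw [mem_coe, mem_tripleFactorizations] at hp ⊢
    exact ⟨by rw [← hp.1]; ring, hn⟩
  · rintro ⟨a, b, c⟩ - ⟨a', b', c'⟩ - h
    simpa [right_ne_zero_of_mul hn] using h

theorem subMult_tau3 : SubMult fun n => tau3 n :=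
  ⟨fun _ _ ha hb => (Nat.cast_le.2 (tau3_mul_le ha.ne' hb.ne')).trans_eq (Nat.cast_mul ..),
    fun _ _ hn hd => Nat.cast_le.2 (tau3_le_of_dvd hn.ne' hd)⟩

theorem SubMult.mul {v w : ℕ → ℝ} (hv : SubMult v) (hw : SubMult w) (hv0 : ∀ n, 0 ≤ v n)
    (hw0 : ∀ n, 0 ≤ w n) : SubMult fun n => v n * w n := by
  refine ⟨fun a b ha hb => ?_, fun d n hn hd => ?_⟩
  · calc v (a * b) * w (a * b) ≤ (v a * v b) * (w a * w b) :=
          mul_le_mul (hv.1 a b ha hb) (hw.1 a b ha hb) (hw0 _) (mul_nonneg (hv0 a) (hv0 b))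
      _ = _ := mul_mul_mul_comm ..
  · exact mul_le_mul (hv.2 d n hn hd) (hw.2 d n hn hd) (hw0 d) (hv0 n)

theorem sum_div_le_log_mul_MlogAvg (w : ℕ → ℝ) {L : ℕ} (hL : 2 ≤ L) :
    ∑ n ∈ Icc 1 L, w n / (n : ℝ) ≤ Real.log L * MlogAvg w L := by
  rw [mul_comm, ← div_le_iff₀ (Real.log_pos (by exact_mod_cast hL))]
  let avg (x : ℕ) : ℝ := (∑ n ∈ Icc 1 x, w n / (n : ℝ)) / Real.log x
  refine le_ciSup₂ (f := fun x (_ : x ∈ Icc 2 L) => avg x) (Set.Finite.bddAbove ?_) L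
    (mem_Icc.2 ⟨hL, le_rfl⟩)
  refine ((Icc 2 L).finite_toSet.image avg).subset (Set.iUnion_subset ?_)
  rintro x _ ⟨hx, rfl⟩
  exact ⟨x, hx, rfl⟩

theorem den_sub_dvd {x y : ℚ} {k : ℕ} (hx : x.den ∣ k) (hy : y.den ∣ k) : (x - y).den ∣ k :=
  (Rat.sub_den_dvd_lcm x y).trans (Nat.lcm_dvd hx hy)

theorem card_le_of_den_sub_dvd {g : ℕ} (hg : g ≠ 0) {Y : Finset ℚ}
    (hdiam : ∀ y ∈ Y, ∀ y' ∈ Y, |y - y'| < 1) (hden : ∀ y ∈ Y, ∀ y' ∈ Y, (y - y').den ∣ g) :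
    #Y ≤ g := by
  obtain rfl | hY := Y.eq_empty_or_nonempty
  · simp
  set m := Y.min' hY
  have hmY : m ∈ Y := Y.min'_mem hY
  have hg0 : (0 : ℚ) < g := by positivity
  have exists_nat (y : ℚ) (hy : y ∈ Y) : ∃ N : ℕ, (g : ℚ) * (y - m) = N := by
    obtain ⟨e, he⟩ := hden y hy m hmY
    have hnum : 0 ≤ (y - m).num := Rat.num_nonneg.2 (sub_nonneg.2 (Y.min'_le y hy))
    refine ⟨e * (y - m).num.toNat, ?_⟩
    have hcast : (((y - m).num.toNat : ℤ) : ℚ) = (y - m).num := by rw [Int.toNat_of_nonneg hnum]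
    push_cast at hcast ⊢
    rw [hcast, he, ← Rat.mul_den_eq_num (y - m)]
    push_cast
    ring
  choose! N hN using exists_nat
  rw [← card_range g]
  refine card_le_card_of_injOn N (fun y hy => ?_) fun y hy y' hy' hyy' => ?_
  · have : (N y : ℚ) < g := by
      rw [← hN y hy]
      exact mul_lt_of_lt_one_right hg0 (lt_of_abs_lt (hdiam y hy m hmY))
    simpa using this
  · have : (g : ℚ) * (y - m) = g * (y' - m) := by rw [hN y hy, hN y' hy', hyy']
    exact sub_left_injective (mul_left_cancel₀ hg0.ne' this)

theorem mem_Qeq {q : ℕ} {y : ℚ} : y ∈ Qeq q ↔ 0 < y ∧ y ≤ 1 ∧ y.den = q := by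
  simp only [Qeq, mem_image, mem_filter, mem_Icc]
  constructor
  · rintro ⟨a, ⟨⟨ha, haq⟩, hcop⟩, rfl⟩
    have hq : 0 < q := ha.trans haq
    have hq' : (0 : ℚ) < q := by exact_mod_cast hq
    refine ⟨by positivity, (div_le_one hq').2 (by exact_mod_cast haq), ?_⟩
    have hden := Rat.den_div_eq_of_coprime (Int.natCast_pos.2 hq) (a := a) hcop
    simpa only [Int.cast_natCast, Nat.cast_inj] using hden
  · rintro ⟨hy0, hy1, rfl⟩
    have hnum : ((y.num.toNat : ℕ) : ℤ) = y.num := Int.toNat_of_nonneg (Rat.num_nonneg.2 hy0.le)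
    have hnum0 : 0 < y.num := Rat.num_pos.2 hy0
    have hnum1 : y.num ≤ y.den := by
      have : (y.num : ℚ) ≤ y.den := by
        rw [← Rat.mul_den_eq_num]
        exact mul_le_of_le_one_left (by positivity) hy1
      exact_mod_cast this
    refine ⟨y.num.toNat, ⟨⟨by lia, by lia⟩, ?_⟩, ?_⟩
    · rw [← Int.natAbs_of_nonneg hnum0.le, Int.toNat_natCast]
      exact y.reduced
    · rw [← Int.cast_natCast, hnum, Rat.num_div_den]

theorem mem_Qle {L : ℕ} {y : ℚ} : y ∈ Qle L ↔ 0 < y ∧ y ≤ 1 ∧ y.den ≤ L := by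
  simp only [Qle, mem_biUnion, mem_Icc, mem_Qeq]
  constructor
  · rintro ⟨q, ⟨-, hqL⟩, hy0, hy1, rfl⟩
    exact ⟨hy0, hy1, hqL⟩
  · rintro ⟨hy0, hy1, hyL⟩
    exact ⟨y.den, ⟨y.den_pos, hyL⟩, hy0, hy1, rfl⟩

theorem abs_sub_lt_one_of_mem_Qle {L : ℕ} {y y' : ℚ} (hy : y ∈ Qle L) (hy' : y' ∈ Qle L) :
    |y - y'| < 1 := by
  obtain ⟨h0, h1, -⟩ := mem_Qle.1 hy
  obtain ⟨h0', h1', -⟩ := mem_Qle.1 hy'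
  exact abs_sub_lt_iff.2 ⟨by linarith, by linarith⟩

/-- The set `A ∩ Q_{=k}` of elements of `A` with reduced denominator `k`, for sets `A` of rationals
that need not lie in `[0, 1]`. -/
def denPart (A : Finset ℚ) (k : ℕ) : Finset ℚ := {x ∈ A | x.den = k}

theorem mem_denPart {A : Finset ℚ} {k : ℕ} {x : ℚ} : x ∈ denPart A k ↔ x ∈ A ∧ x.den = k :=
  mem_filter

theorem card_denPart_le {L n : ℕ} {B : Finset ℚ} (hB : B ⊆ Qle L)
    (hn : ∀ l, 1 ≤ l → l ≤ L → #(B ∩ Qeq l) ≤ n) (l : ℕ) : #(denPart B l) ≤ n := by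
  obtain hempty | ⟨y, hy⟩ := (denPart B l).eq_empty_or_nonempty
  · simp [hempty]
  obtain ⟨hyB, rfl⟩ := mem_denPart.1 hy
  refine (card_le_card fun z hz => ?_).trans (hn _ y.den_pos (mem_Qle.1 (hB hyB)).2.2)
  obtain ⟨hzB, hzl⟩ := mem_denPart.1 hz
  obtain ⟨hz0, hz1, -⟩ := mem_Qle.1 (hB hzB)
  exact mem_inter.2 ⟨hzB, mem_Qeq.2 ⟨hz0, hz1, hzl⟩⟩

theorem coprime_of_lcm_eq_mul {a b c d : ℕ} (ha : 0 < a) (hb : 0 < b) (hc : a.lcm b = b * c)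
    (hd : a.lcm b = a * d) : c.Coprime d := by
  have hac : a = a.gcd b * c := Nat.eq_of_mul_eq_mul_left hb <| by
    rw [mul_comm b, ← Nat.gcd_mul_lcm, hc]; ring
  have hbd : b = a.gcd b * d := Nat.eq_of_mul_eq_mul_left ha <| by
    rw [← Nat.gcd_mul_lcm, hd]; ring
  refine Nat.eq_of_mul_eq_mul_left (Nat.gcd_pos_of_pos_left b ha) ?_
  rw [← Nat.gcd_mul_left, ← hac, ← hbd, mul_one]

/-- The parameters `g, s, t, u` of a triple `(k, l, q) = (gst, gsu, gtu)` of positive integers with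
`s, t, u` pairwise coprime. The denominators of two rationals and of their difference form such a
triple. -/
@[ext]
structure DenTriple where
  (g s t u : ℕ)
  g_pos : 0 < g
  s_pos : 0 < s
  t_pos : 0 < t
  u_pos : 0 < u
  coprime_st : s.Coprime t
  coprime_su : s.Coprime u
  coprime_tu : t.Coprime u

namespace DenTriple

/-- The denominator of the minuend. -/
def k (p : DenTriple) : ℕ := p.g * p.s * p.t

/-- The denominator of the subtrahend. -/
def l (p : DenTriple) : ℕ := p.g * p.s * p.u

/-- The denominator of the difference. -/
def q (p : DenTriple) : ℕ := p.g * p.t * p.u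

theorem k_pos (p : DenTriple) : 0 < p.k := Nat.mul_pos (Nat.mul_pos p.g_pos p.s_pos) p.t_pos

theorem q_pos (p : DenTriple) : 0 < p.q := Nat.mul_pos (Nat.mul_pos p.g_pos p.t_pos) p.u_pos

theorem s_le_l (p : DenTriple) : p.s ≤ p.l :=
  (Nat.le_mul_of_pos_left _ p.g_pos).trans (Nat.le_mul_of_pos_right _ p.u_pos)

theorem apply_k_le {v : ℕ → ℝ} (hv : ∀ n, 0 ≤ v n) (hsub : SubMult v) (p : DenTriple) :
    v p.k ≤ v p.q * v p.s := by
  calc v p.k = v (p.g * p.t * p.s) := by rw [k, mul_right_comm]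
    _ ≤ v (p.g * p.t) * v p.s := hsub.1 _ _ (Nat.mul_pos p.g_pos p.t_pos) p.s_pos
    _ ≤ v p.q * v p.s :=
        mul_le_mul_of_nonneg_right (hsub.2 _ _ p.q_pos (Nat.dvd_mul_right ..)) (hv _)

theorem gcd_dens (p : DenTriple) : (p.k.gcd p.l).gcd p.q = p.g := by
  rw [k, l, q, Nat.gcd_mul_left, p.coprime_tu, mul_one, mul_assoc, Nat.gcd_mul_left,
    (p.coprime_st.mul_right p.coprime_su).gcd_eq_one, mul_one]

theorem exists_of_dvd_lcm {k l q : ℕ} (hk : 0 < k) (hl : 0 < l) (hq : 0 < q)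
    (hkd : k ∣ l.lcm q) (hld : l ∣ k.lcm q) (hqd : q ∣ k.lcm l) :
    ∃ p : DenTriple, p.k = k ∧ p.l = l ∧ p.q = q := by
  have hkq : k.lcm q = k.lcm l :=
    (Nat.lcm_dvd (Nat.dvd_lcm_left ..) hqd).antisymm (Nat.lcm_dvd (Nat.dvd_lcm_left ..) hld)
  have hlq : l.lcm q = k.lcm l :=
    (Nat.lcm_dvd (Nat.dvd_lcm_right ..) hqd).antisymm (Nat.lcm_dvd hkd (Nat.dvd_lcm_left ..))
  have hm : 0 < k.lcm l := Nat.lcm_pos hk hl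
  -- `s, t, u` are the cofactors of `q, l, k` in their common least common multiple.
  obtain ⟨u, hu⟩ := Nat.dvd_lcm_left k l
  obtain ⟨t, ht⟩ := Nat.dvd_lcm_right k l
  obtain ⟨s, hs⟩ := hqd
  have hsu : s.Coprime u := coprime_of_lcm_eq_mul hk hq (hkq.trans hs) (hkq.trans hu)
  have hst : s.Coprime t := coprime_of_lcm_eq_mul hl hq (hlq.trans hs) (hlq.trans ht)
  have htu : t.Coprime u := coprime_of_lcm_eq_mul hk hl ht hu
  obtain ⟨g, hg⟩ : s * t * u ∣ k.lcm l :=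
    (hsu.mul_left htu).mul_dvd_of_dvd_of_dvd
      (hst.mul_dvd_of_dvd_of_dvd ⟨q, hs.trans (mul_comm ..)⟩ ⟨l, ht.trans (mul_comm ..)⟩)
      ⟨k, hu.trans (mul_comm ..)⟩
  have hpos : 0 < s * t * u * g := hg ▸ hm
  have hu0 : 0 < u := Nat.pos_of_mul_pos_left (hu ▸ hm)
  have ht0 : 0 < t := Nat.pos_of_mul_pos_left (ht ▸ hm)
  have hs0 : 0 < s := Nat.pos_of_mul_pos_left (hs ▸ hm)
  refine ⟨⟨g, s, t, u, Nat.pos_of_mul_pos_left hpos, hs0, ht0, hu0, hst, hsu, htu⟩,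
    Nat.eq_of_mul_eq_mul_right hu0 ?_, Nat.eq_of_mul_eq_mul_right ht0 ?_,
    Nat.eq_of_mul_eq_mul_right hs0 ?_⟩
  · rw [← hu, hg, DenTriple.k]; ring
  · rw [← ht, hg, DenTriple.l]; ring
  · rw [← hs, hg, DenTriple.q]; ring

theorem exists_eq_den (x y : ℚ) :
    ∃ p : DenTriple, p.k = x.den ∧ p.l = y.den ∧ p.q = (x - y).den := by
  refine exists_of_dvd_lcm x.den_pos y.den_pos (x - y).den_pos ?_ ?_ (Rat.sub_den_dvd_lcm x y)
  · simpa using Rat.add_den_dvd_lcm y (x - y)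
  · simpa using Rat.sub_den_dvd_lcm x (x - y)

/-- The pairs in `A × B` with difference in `D` for which the three denominators are those
prescribed by `p`. -/
def pairs (p : DenTriple) (A B D : Finset ℚ) : Finset (ℚ × ℚ) :=
  {xy ∈ denPart A p.k ×ˢ denPart B p.l | xy.1 - xy.2 ∈ denPart D p.q}

section Pairs

variable {p : DenTriple} {A B D : Finset ℚ}

theorem mem_pairs {x y : ℚ} : (x, y) ∈ p.pairs A B D ↔
    x ∈ denPart A p.k ∧ y ∈ denPart B p.l ∧ x - y ∈ denPart D p.q := by
  simp only [pairs, mem_filter, mem_product, and_assoc]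

theorem card_filter_sub_mem_le (hB : ∀ y ∈ B, ∀ y' ∈ B, |y - y'| < 1) (x y' : ℚ) :
    #{y ∈ denPart B p.l | x - y ∈ denPart D p.q ∧ x - y + y' ∈ denPart A p.k} ≤ p.g := by
  refine card_le_of_den_sub_dvd p.g_pos.ne' (fun y₁ h₁ y₂ h₂ => ?_) fun y₁ h₁ y₂ h₂ => ?_ <;>
    simp only [mem_filter, mem_denPart] at h₁ h₂ <;>
    obtain ⟨⟨hB₁, hl₁⟩, ⟨-, hq₁⟩, -, hk₁⟩ := h₁ <;>
    obtain ⟨⟨hB₂, hl₂⟩, ⟨-, hq₂⟩, -, hk₂⟩ := h₂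
  · exact hB y₁ hB₁ y₂ hB₂
  · have hl : (y₁ - y₂).den ∣ p.l := den_sub_dvd hl₁.dvd hl₂.dvd
    have hq : (y₁ - y₂).den ∣ p.q := by simpa using den_sub_dvd hq₂.dvd hq₁.dvd
    have hk : (y₁ - y₂).den ∣ p.k := by simpa using den_sub_dvd hk₂.dvd hk₁.dvd
    rw [← p.gcd_dens]
    exact Nat.dvd_gcd (Nat.dvd_gcd hk hl) hq

theorem card_filter_sub_eq_sub_le (hB : ∀ y ∈ B, ∀ y' ∈ B, |y - y'| < 1) :
    #{xy ∈ p.pairs A B D ×ˢ p.pairs A B D | xy.1.1 - xy.1.2 = xy.2.1 - xy.2.2} ≤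
      #(denPart A p.k) * #(denPart B p.l) * p.g := by
  calc _ ≤ #((denPart A p.k ×ˢ denPart B p.l).sigma fun xy' =>
        {y ∈ denPart B p.l | xy'.1 - y ∈ denPart D p.q ∧ xy'.1 - y + xy'.2 ∈ denPart A p.k}) := by
        refine card_le_card_of_injOn (fun xy => ⟨(xy.1.1, xy.2.2), xy.1.2⟩) ?_ ?_
        · rintro ⟨⟨x, y⟩, x', y'⟩ hxy
          simp only [mem_coe, mem_filter, mem_product, mem_pairs] at hxy
          obtain ⟨⟨⟨hx, hy, hxy⟩, hx', hy', -⟩, h⟩ := hxy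
          simp only [mem_coe, mem_sigma, mem_product, mem_filter]
          exact ⟨⟨hx, hy'⟩, hy, hxy, by rwa [h, sub_add_cancel]⟩
        · rintro ⟨⟨x₁, y₁⟩, x₁', y₁'⟩ h₁ ⟨⟨x₂, y₂⟩, x₂', y₂'⟩ h₂ heq
          have h₁ := (mem_filter.1 h₁).2
          have h₂ := (mem_filter.1 h₂).2
          grind
    _ = ∑ xy' ∈ denPart A p.k ×ˢ denPart B p.l, #{y ∈ denPart B p.l |
          xy'.1 - y ∈ denPart D p.q ∧ xy'.1 - y + xy'.2 ∈ denPart A p.k} := card_sigma ..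
    _ ≤ #(denPart A p.k ×ˢ denPart B p.l) * p.g :=
        sum_le_card_nsmul _ _ _ fun xy' _ => card_filter_sub_mem_le hB xy'.1 xy'.2
    _ = _ := by rw [card_product]

theorem sq_card_pairs_le (hB : ∀ y ∈ B, ∀ y' ∈ B, |y - y'| < 1) :
    #(p.pairs A B D) ^ 2 ≤ #(denPart D p.q) * (#(denPart A p.k) * #(denPart B p.l) * p.g) :=
  (sq_card_le_card_mul_card_filter_eq fun _ hxy => (mem_pairs.1 hxy).2.2).trans <|
    Nat.mul_le_mul_left _ (card_filter_sub_eq_sub_le hB)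

end Pairs

variable {L : ℕ}

theorem exists_sum_le_sum_card_pairs (A D : Finset ℚ) {B : Finset ℚ} (hB : ∀ y ∈ B, y.den ≤ L)
    {w : ℕ → ℝ} (hw : ∀ k, 0 ≤ w k) :
    ∃ P : Finset DenTriple, (∀ p ∈ P, p.l ≤ L) ∧
      (∑ x ∈ A, ∑ y ∈ B, if x - y ∈ D then w x.den else 0) ≤
        ∑ p ∈ P, w p.k * #(p.pairs A B D) := by
  classical
  choose φ hk hl hq using exists_eq_den
  set T := {xy ∈ A ×ˢ B | xy.1 - xy.2 ∈ D} with hT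
  refine ⟨T.image fun xy => φ xy.1 xy.2, ?_, ?_⟩
  · simp only [forall_mem_image, hl]
    exact fun xy hxy => hB _ (mem_product.1 (mem_filter.1 hxy).1).2
  rw [← sum_product' (f := fun x y : ℚ => if x - y ∈ D then w x.den else 0), ← sum_filter, ← hT,
    ← sum_fiberwise_of_maps_to fun xy hxy => mem_image_of_mem (fun xy => φ xy.1 xy.2) hxy]
  refine sum_le_sum fun p _ => ?_
  have hsubset : {xy ∈ T | φ xy.1 xy.2 = p} ⊆ p.pairs A B D := by
    rintro ⟨x, y⟩ hxy
    simp only [hT, mem_filter, mem_product] at hxy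
    obtain ⟨⟨⟨hx, hy⟩, hxy⟩, rfl⟩ := hxy
    exact mem_pairs.2 ⟨mem_denPart.2 ⟨hx, (hk x y).symm⟩, mem_denPart.2 ⟨hy, (hl x y).symm⟩,
      mem_denPart.2 ⟨hxy, (hq x y).symm⟩⟩
  calc ∑ xy ∈ T with φ xy.1 xy.2 = p, w xy.1.den
      ≤ ∑ xy ∈ p.pairs A B D, w xy.1.den :=
        sum_le_sum_of_subset_of_nonneg hsubset fun _ _ _ => hw _
    _ = ∑ _xy ∈ p.pairs A B D, w p.k :=
        sum_congr rfl fun xy hxy => by rw [(mem_denPart.1 (mem_pairs.1 hxy).1).2]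
    _ = w p.k * #(p.pairs A B D) := by rw [sum_const, nsmul_eq_mul, mul_comm]

section Sums

variable {P : Finset DenTriple}

theorem sum_g_mul_s_le (hP : ∀ p ∈ P, p.l ≤ L) (k : ℕ) :
    ∑ p ∈ P with p.k = k, p.g * p.s ≤ tau3 k * L := by
  calc ∑ p ∈ P with p.k = k, p.g * p.s
      ≤ ∑ σ ∈ (tripleFactorizations k).sigma fun f => Icc 1 (L / (f.1 * f.2.1)),
          σ.1.1 * σ.1.2.1 := by
        refine sum_le_sum_of_injOn (fun p => ⟨(p.g, p.s, p.t), p.u⟩) (fun p hp => ?_)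
          (fun p _ p' _ h => ?_) (fun _ _ => Nat.zero_le _) fun _ _ => le_rfl
        · obtain ⟨hpP, rfl⟩ := mem_filter.1 hp
          simp only [mem_coe, mem_sigma, mem_tripleFactorizations, mem_Icc]
          refine ⟨⟨rfl, p.k_pos.ne'⟩, p.u_pos, ?_⟩
          rw [Nat.le_div_iff_mul_le (Nat.mul_pos p.g_pos p.s_pos), mul_comm]
          exact hP p hpP
        · simp only [Sigma.mk.injEq, Prod.mk.injEq, heq_eq_eq] at h
          exact DenTriple.ext h.1.1 h.1.2.1 h.1.2.2 h.2
    _ = ∑ f ∈ tripleFactorizations k, L / (f.1 * f.2.1) * (f.1 * f.2.1) := by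
        simp only [sum_sigma, sum_const, Nat.card_Icc, add_tsub_cancel_right, smul_eq_mul]
    _ ≤ tau3 k * L := sum_le_card_nsmul _ _ _ fun f _ => Nat.div_mul_le_self ..

theorem sum_card_denPart_mul_le (hP : ∀ p ∈ P, p.l ≤ L) {w : ℕ → ℝ} (hw : ∀ k, 0 ≤ w k)
    (A : Finset ℚ) :
    ∑ p ∈ P, (#(denPart A p.k) : ℝ) * (w p.k / tau3 p.k * (p.g * p.s)) ≤
      L * ∑ x ∈ A, w x.den := by
  simp only [denPart]
  rw [sum_card_filter_eq_mul, mul_sum]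
  refine sum_le_sum fun x _ => ?_
  have hτ : (tau3 x.den : ℝ) ≠ 0 := by exact_mod_cast (tau3_pos x.den_nz).ne'
  calc ∑ p ∈ P with p.k = x.den, w p.k / tau3 p.k * (p.g * p.s)
      = w x.den / tau3 x.den * ((∑ p ∈ P with p.k = x.den, p.g * p.s : ℕ) : ℝ) := by
        push_cast
        rw [mul_sum]
        exact sum_congr rfl fun p hp => by rw [(mem_filter.1 hp).2]
    _ ≤ w x.den / tau3 x.den * (tau3 x.den * L) :=
        mul_le_mul_of_nonneg_left (by exact_mod_cast sum_g_mul_s_le hP x.den)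
          (div_nonneg (hw _) (Nat.cast_nonneg _))
    _ = L * w x.den := by field_simp

theorem sum_apply_k_div_s_le (hP : ∀ p ∈ P, p.l ≤ L) {v : ℕ → ℝ} (hv : ∀ n, 0 ≤ v n)
    (hsub : SubMult v) (q : ℕ) :
    ∑ p ∈ P with p.q = q, v p.k / p.s ≤ tau3 q * v q * ∑ s ∈ Icc 1 L, v s / s := by
  calc ∑ p ∈ P with p.q = q, v p.k / p.s
      ≤ ∑ σ ∈ tripleFactorizations q ×ˢ Icc 1 L, v q * (v σ.2 / σ.2) := by
        refine sum_le_sum_of_injOn (fun p => ((p.g, p.t, p.u), p.s)) (fun p hp => ?_)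
          (fun p _ p' _ h => ?_)
          (fun _ _ => mul_nonneg (hv _) (div_nonneg (hv _) (Nat.cast_nonneg _))) fun p hp => ?_
        · obtain ⟨hpP, rfl⟩ := mem_filter.1 hp
          simp only [mem_coe, mem_product, mem_tripleFactorizations, mem_Icc]
          exact ⟨⟨rfl, p.q_pos.ne'⟩, p.s_pos, p.s_le_l.trans (hP p hpP)⟩
        · simp only [Prod.mk.injEq] at h
          exact DenTriple.ext h.1.1 h.2 h.1.2.1 h.1.2.2
        · obtain ⟨-, rfl⟩ := mem_filter.1 hp
          rw [← mul_div_assoc]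
          exact div_le_div_of_nonneg_right (p.apply_k_le hv hsub) (Nat.cast_nonneg _)
    _ = tau3 q * v q * ∑ s ∈ Icc 1 L, v s / s := by
        simp only [sum_product, sum_const, ← mul_sum, card_tripleFactorizations, nsmul_eq_mul]
        ring

theorem sum_card_denPart_mul_apply_k_div_s_le (hP : ∀ p ∈ P, p.l ≤ L) {v : ℕ → ℝ}
    (hv : ∀ n, 0 ≤ v n) (hsub : SubMult v) (D : Finset ℚ) :
    ∑ p ∈ P, (#(denPart D p.q) : ℝ) * (v p.k / p.s) ≤
      (∑ z ∈ D, tau3 z.den * v z.den) * ∑ s ∈ Icc 1 L, v s / s := by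
  simp only [denPart]
  rw [sum_card_filter_eq_mul, sum_mul]
  exact sum_le_sum fun z _ => sum_apply_k_div_s_le hP hv hsub z.den

end Sums

end DenTriple

section WeightedCount

variable {L n : ℕ} {A B D : Finset ℚ} {w : ℕ → ℝ}

theorem sq_weight_mul_card_pairs_le (hdiam : ∀ y ∈ B, ∀ y' ∈ B, |y - y'| < 1)
    (hn : ∀ l, #(denPart B l) ≤ n) (p : DenTriple) :
    (w p.k * #(p.pairs A B D)) ^ 2 ≤
      #(denPart A p.k) * (w p.k / tau3 p.k * (p.g * p.s)) *
        (n * (#(denPart D p.q) * (w p.k * tau3 p.k / p.s))) := by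
  have hτ : (tau3 p.k : ℝ) ≠ 0 := by exact_mod_cast (tau3_pos p.k_pos.ne').ne'
  have hs : (p.s : ℝ) ≠ 0 := by exact_mod_cast p.s_pos.ne'
  have hcard : (#(p.pairs A B D) : ℝ) ^ 2 ≤
      #(denPart D p.q) * (#(denPart A p.k) * n * p.g) := by
    have hcardNat : #(p.pairs A B D) ^ 2 ≤ #(denPart D p.q) * (#(denPart A p.k) * n * p.g) :=
      (DenTriple.sq_card_pairs_le hdiam).trans <| Nat.mul_le_mul_left _ <|
        Nat.mul_le_mul_right _ <| Nat.mul_le_mul_left _ (hn p.l)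
    exact_mod_cast hcardNat
  calc (w p.k * #(p.pairs A B D)) ^ 2 = w p.k ^ 2 * (#(p.pairs A B D) : ℝ) ^ 2 := mul_pow ..
    _ ≤ w p.k ^ 2 * (#(denPart D p.q) * (#(denPart A p.k) * n * p.g)) :=
        mul_le_mul_of_nonneg_left hcard (sq_nonneg _)
    _ = _ := by field_simp

theorem sq_sum_weight_le (hden : ∀ y ∈ B, y.den ≤ L) (hdiam : ∀ y ∈ B, ∀ y' ∈ B, |y - y'| < 1)
    (hn : ∀ l, #(denPart B l) ≤ n) (hw : ∀ k, 0 ≤ w k) (hsub : SubMult w) :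
    (∑ x ∈ A, ∑ y ∈ B, if x - y ∈ D then w x.den else 0) ^ 2 ≤
      (L * ∑ x ∈ A, w x.den) * (n * ((∑ z ∈ D, w z.den * (tau3 z.den : ℝ) ^ 2) *
        ∑ s ∈ Icc 1 L, w s * tau3 s / s)) := by
  obtain ⟨P, hP, hsum⟩ := DenTriple.exists_sum_le_sum_card_pairs A D hden hw
  have hwτ0 (m : ℕ) : 0 ≤ w m * tau3 m := mul_nonneg (hw m) (Nat.cast_nonneg _)
  have hwτ : SubMult fun m => w m * tau3 m := hsub.mul subMult_tau3 hw fun _ => Nat.cast_nonneg _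
  have hA0 (p : DenTriple) :
      0 ≤ (#(denPart A p.k) : ℝ) * (w p.k / tau3 p.k * (p.g * p.s)) := by
    have := hw p.k
    positivity
  have hD0 (p : DenTriple) :
      0 ≤ (n : ℝ) * (#(denPart D p.q) * (w p.k * tau3 p.k / p.s)) := by
    have := hw p.k
    positivity
  have hDτ : ∑ z ∈ D, w z.den * (tau3 z.den : ℝ) ^ 2 =
      ∑ z ∈ D, tau3 z.den * (w z.den * tau3 z.den) := sum_congr rfl fun z _ => by ring
  calc _ ≤ (∑ p ∈ P, w p.k * #(p.pairs A B D)) ^ 2 :=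
        pow_le_pow_left₀ (sum_nonneg fun x _ => sum_nonneg fun y _ => ite_nonneg (hw _) le_rfl)
          hsum 2
    _ ≤ (∑ p ∈ P, (#(denPart A p.k) : ℝ) * (w p.k / tau3 p.k * (p.g * p.s))) *
          ∑ p ∈ P, n * (#(denPart D p.q) * (w p.k * tau3 p.k / p.s)) :=
        sum_sq_le_sum_mul_sum_of_sq_le_mul P (fun p _ => hA0 p) (fun p _ => hD0 p)
          fun p _ => sq_weight_mul_card_pairs_le hdiam hn p
    _ ≤ _ := by
        rw [hDτ, ← mul_sum]
        refine mul_le_mul (DenTriple.sum_card_denPart_mul_le hP hw A)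
          (mul_le_mul_of_nonneg_left
            (DenTriple.sum_card_denPart_mul_apply_k_div_s_le hP hwτ0 hwτ D) (Nat.cast_nonneg n))
          ?_ (mul_nonneg (Nat.cast_nonneg _) (sum_nonneg fun x _ => hw _))
        rw [mul_sum]
        exact sum_nonneg fun p _ => hD0 p

theorem statement_3_general (hL : 2 ≤ L) (hden : ∀ y ∈ B, y.den ≤ L)
    (hdiam : ∀ y ∈ B, ∀ y' ∈ B, |y - y'| < 1) (hn : ∀ l, #(denPart B l) ≤ n)
    (hw : ∀ k, 0 ≤ w k) (hsub : SubMult w) :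
    (∑ x ∈ A, ∑ y ∈ B, if x - y ∈ D then w x.den else 0) ≤
      Real.sqrt ((L : ℝ) * n * Real.log L * MlogAvg (fun k => w k * tau3 k) L *
        (∑ z ∈ D, w z.den * (tau3 z.den : ℝ) ^ 2) * ∑ x ∈ A, w x.den) := by
  have hA0 : 0 ≤ ∑ x ∈ A, w x.den := sum_nonneg fun x _ => hw _
  have hD0 : 0 ≤ ∑ z ∈ D, w z.den * (tau3 z.den : ℝ) ^ 2 :=
    sum_nonneg fun z _ => mul_nonneg (hw _) (sq_nonneg _)
  refine Real.le_sqrt_of_sq_le ((sq_sum_weight_le hden hdiam hn hw hsub).trans ?_)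
  calc (L * ∑ x ∈ A, w x.den) * (n * ((∑ z ∈ D, w z.den * (tau3 z.den : ℝ) ^ 2) *
        ∑ s ∈ Icc 1 L, w s * tau3 s / s))
      ≤ (L * ∑ x ∈ A, w x.den) * (n * ((∑ z ∈ D, w z.den * (tau3 z.den : ℝ) ^ 2) *
        (Real.log L * MlogAvg (fun k => w k * tau3 k) L))) := by
        gcongr
        exact sum_div_le_log_mul_MlogAvg (fun k => w k * tau3 k) hL
    _ = _ := by ring

end WeightedCount

theorem statement_3 :
    ∃ C > (0 : ℝ), ∀ K L n : ℕ, 1 ≤ K → 2 ≤ L → 1 ≤ n →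
      ∀ A : Finset ℚ, A ⊆ Qle K →
      ∀ 𝒞 : Finset ℚ, (0 : ℚ) ∉ 𝒞 →
      ∀ B : Finset ℚ, B ⊆ Qle L →
        (∀ ℓ : ℕ, 1 ≤ ℓ → ℓ ≤ L → (B ∩ Qeq ℓ).card ≤ n) →
      ∀ w : ℕ → ℝ, (∀ k, 0 ≤ w k) → SubMult w →
        (∑ x ∈ A, ∑ y ∈ B, if x - y ∈ 𝒞 then w x.den else 0) ≤
          C * Real.sqrt ((L : ℝ) * n * Real.log L * MlogAvg (fun k => w k * tau3 k) L *
            (∑ z ∈ 𝒞, w z.den * (tau3 z.den : ℝ) ^ 2) * ∑ x ∈ A, w x.den) := by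
  refine ⟨1, one_pos, fun K L n _ hL _ A _ 𝒞 _ B hB hn w hw hsub => ?_⟩
  rw [one_mul]
  exact statement_3_general hL (fun y hy => (mem_Qle.1 (hB hy)).2.2)
    (fun y hy y' hy' => abs_sub_lt_one_of_mem_Qle (hB hy) (hB hy'))
    (card_denPart_le hB hn) hw hsub
end

section
/- There exist absolute constants c > 0 and C > 0 such that the following holds. Let ν, α ∈ (0,1], let N, K, q be positive integers with ν·α·N/(K·q²) ≥ C. Let A ⊆ [N] be a set with no non-zero square differences and density α = |A|/N, and suppose that Σ over a with a/q ∈ Q_{=q} of ∫_{𝔐(a/q; N, K)} |1̂_A(γ) − α·1̂_{[N]}(γ)|² dγ ≥ ν·α·|A|. Then there exists an integer N' ≥ c·ν·α·N/(K·q²) and a set A' ⊆ [N'] with no non-zero square differences whose density α' = |A'|/N' satisfies α' ≥ (1 + ν/20)·α. -/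
open MeasureTheory

/-- `A` has no non-zero square differences. -/
def NoSquareDiff (A : Finset ℕ) : Prop :=
  ∀ a ∈ A, ∀ b ∈ A, ∀ n : ℕ, 0 < n → a ≠ b + n ^ 2

/-- `e(x) = e^{2πix}`. -/
noncomputable def eu (x : ℝ) : ℂ := Complex.exp (2 * Real.pi * Complex.I * x)

/-- The Fourier transform of the indicator of `A`: `1̂_A(γ) = ∑_{a ∈ A} e(aγ)`. -/
noncomputable def hatInd (A : Finset ℕ) (γ : ℝ) : ℂ := ∑ a ∈ A, eu (a * γ)

/-- The major arc `𝔐(a/q; N, K) = {γ ∈ (0,1] : ‖γ - a/q‖ ≤ K/(qN)}`, where `‖·‖` is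
the distance to the nearest integer. -/
def majorArc (a q N : ℕ) (K : ℝ) : Set ℝ :=
  {γ ∈ Set.Ioc (0 : ℝ) 1 | |γ - (a : ℝ) / q - round (γ - (a : ℝ) / q)| ≤ K / (q * N)}

/-!
Suppose that the balanced function `f = 1_A - α 1_{[N]}` has energy at least `να|A|` on the major
arcs of denominator `q`, and let `P = {d, 2d, …, Ld}` where `q ∣ d` and `L` is a small multiple of
`ναN / (Kd)`. The arcs are so narrow that `e(djγ)` is close to `1` on them for all `j ≤ L`, so
`|1̂_P|² ≥ L²/2` there. The arcs are also disjoint, hence Parseval gives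
`∑ₓ |(f * 1_P)(x)|² ≥ ναL²|A| / 2`. If every translate of `-P` met `A` in at most `(1 + ν/20)αL`
points, then expanding the square would bound the same sum by about `(ν/20)αL²|A|`, a
contradiction. For `d = q²`, rescaling a progression on which `A` is dense preserves the absence of
square differences.
-/

section Exponential

lemma eu_add (x y : ℝ) : eu (x + y) = eu x * eu y := by
  simp only [eu, ← Complex.exp_add]
  push_cast
  ring_nf

lemma eu_intCast (m : ℤ) : eu m = 1 := by
  rw [eu, Complex.exp_eq_one_iff]
  exact ⟨m, by push_cast; ring⟩

@[fun_prop]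
lemma continuous_eu : Continuous eu := by
  unfold eu
  fun_prop

@[fun_prop]
lemma continuous_hatInd (A : Finset ℕ) : Continuous (hatInd A) := by
  unfold hatInd
  fun_prop

lemma norm_eu_sub_one_le (x : ℝ) : ‖eu x - 1‖ ≤ 2 * Real.pi * |x| := by
  have h := Real.norm_exp_I_mul_ofReal_sub_one_le (x := 2 * Real.pi * x)
  rw [Real.norm_eq_abs, abs_mul, abs_of_pos Real.two_pi_pos] at h
  convert h using 4
  rw [eu]
  push_cast
  ring_nf

lemma eu_intCast_mul_eq_fourier (n : ℤ) (γ : ℝ) :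
    eu (n * γ) = fourier n (γ : UnitAddCircle) := by
  rw [eu, fourier_coe_apply]
  push_cast
  ring_nf

lemma integral_norm_sq_sum_mul_eu {ι : Type*} (s : Finset ι) (u : ι → ℂ) {k : ι → ℤ}
    (hk : Function.Injective k) :
    ∫ γ in (0 : ℝ)..1, ‖∑ i ∈ s, u i * eu (k i * γ)‖ ^ 2 = ∑ i ∈ s, ‖u i‖ ^ 2 := by
  set p : C(UnitAddCircle, ℂ) := ∑ i ∈ s, u i • fourier (k i) with hp
  have hpγ (γ : ℝ) : ∑ i ∈ s, u i * eu (k i * γ) = p γ := by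
    simp [hp, eu_intCast_mul_eq_fourier]
  have hLp : ContinuousMap.toLp 2 AddCircle.haarAddCircle ℂ p =
      ∑ i ∈ s, u i • fourierLp 2 (k i) := by
    simp only [hp, map_sum, map_smul]
  have horth := (orthonormal_fourier (T := 1).comp k hk).inner_sum u u s
  simp only [Function.comp_apply, ← hLp, ContinuousMap.inner_toLp, Complex.conj_mul',
    Complex.mul_conj', AddCircle.integral_haarAddCircle] at horth
  simp_rw [hpγ]
  have hint := UnitAddCircle.intervalIntegral_preimage 0 fun t => ‖p t‖ ^ 2
  rw [zero_add] at hint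
  rw [hint]
  apply Complex.ofReal_injective
  rw [← integral_complex_ofReal]
  simpa using horth

end Exponential

section MajorArcs

open Finset

variable {a b d q N L n : ℕ} {K γ : ℝ} {F : ℝ → ℂ}

lemma norm_eu_natCast_mul_sub_one_le (hq : 0 < q) (hqn : q ∣ n) (hγ : γ ∈ majorArc a q N K) :
    ‖eu (n * γ) - 1‖ ≤ 2 * Real.pi * (n * (K / (q * N))) := by
  obtain ⟨k, rfl⟩ := hqn
  set m := round (γ - (a : ℝ) / q)
  set θ := γ - (a : ℝ) / q - m with hθ
  have hphase : ((q * k : ℕ) : ℝ) * γ = ((k * a + q * k * m : ℤ) : ℝ) + (q * k : ℕ) * θ := by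
    rw [hθ]
    push_cast
    field_simp
    ring
  rw [hphase, eu_add, eu_intCast, one_mul]
  refine (norm_eu_sub_one_le _).trans ?_
  rw [abs_mul, Nat.abs_cast]
  gcongr
  exact hγ.2

lemma norm_sum_eu_sub_le (hq : 0 < q) (hqd : q ∣ d) (hγ : γ ∈ majorArc a q N K) :
    ‖∑ j ∈ Icc 1 L, eu ((d * j : ℕ) * γ) - L‖ ≤ L * (2 * Real.pi * (d * L * (K / (q * N)))) := by
  have hK : 0 ≤ K / (q * N) := (abs_nonneg _).trans hγ.2
  have hterm : ∀ j ∈ Icc 1 L,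
      ‖eu ((d * j : ℕ) * γ) - 1‖ ≤ 2 * Real.pi * (d * L * (K / (q * N))) := by
    intro j hj
    refine (norm_eu_natCast_mul_sub_one_le hq (hqd.mul_right j) hγ).trans ?_
    push_cast
    gcongr
    exact (mem_Icc.1 hj).2
  simpa using norm_sum_le_of_le _ hterm

lemma sq_div_two_le_norm_sum_eu_sq (hq : 0 < q) (hqd : q ∣ d) (hγ : γ ∈ majorArc a q N K)
    (hphase : d * L * (K / (q * N)) ≤ 1 / 32) :
    (L : ℝ) ^ 2 / 2 ≤ ‖∑ j ∈ Icc 1 L, eu ((d * j : ℕ) * γ)‖ ^ 2 := by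
  set G := ∑ j ∈ Icc 1 L, eu ((d * j : ℕ) * γ)
  have hclose : ‖G - L‖ ≤ L * (1 / 4) := by
    refine (norm_sum_eu_sub_le hq hqd hγ).trans ?_
    gcongr
    nlinarith [Real.pi_lt_four, Real.pi_pos]
  have htri : (L : ℝ) - ‖G‖ ≤ ‖G - L‖ := by
    simpa [norm_sub_rev] using norm_sub_norm_le (L : ℂ) G
  have hlow : 3 / 4 * (L : ℝ) ≤ ‖G‖ := by linarith
  calc (L : ℝ) ^ 2 / 2 ≤ (3 / 4 * (L : ℝ)) ^ 2 := by nlinarith [sq_nonneg (L : ℝ)]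
    _ ≤ ‖G‖ ^ 2 := by gcongr

lemma majorArc_subset_Ioc : majorArc a q N K ⊆ Set.Ioc 0 1 := fun _ hγ => hγ.1

lemma measurableSet_majorArc : MeasurableSet (majorArc a q N K) := by
  have hround : Measurable fun γ : ℝ => (round (γ - (a : ℝ) / q) : ℝ) := by
    simp_rw [round_eq]
    exact measurable_from_top.comp (Int.measurable_floor.comp (by fun_prop))
  exact measurableSet_Ioc.inter <|
    measurableSet_le ((measurable_id.sub_const _).sub hround).abs measurable_const

lemma disjoint_majorArc (ha : a ∈ Icc 1 q) (hb : b ∈ Icc 1 q) (hab : a ≠ b) (hN : 0 < N)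
    (hK : 2 * K < N) : Disjoint (majorArc a q N K) (majorArc b q N K) := by
  rw [mem_Icc] at ha hb
  have hq : (0 : ℝ) < q := by exact_mod_cast (by omega : 0 < q)
  refine Set.disjoint_left.2 fun γ hγa hγb => hab ?_
  have hda := hγa.2
  have hdb := hγb.2
  set m := round (γ - (a : ℝ) / q)
  set n := round (γ - (b : ℝ) / q)
  have hlt : |(b : ℝ) - a + q * (n - m)| < 1 := calc
    |(b : ℝ) - a + q * (n - m)| = q * |(γ - a / q - m) - (γ - b / q - n)| := by
      rw [← abs_of_pos hq, ← abs_mul, abs_of_pos hq]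
      congr 1
      field_simp
      ring
    _ ≤ q * (K / (q * N) + K / (q * N)) := by
      gcongr
      exact (abs_sub _ _).trans (add_le_add hda hdb)
    _ = 2 * K / N := by field_simp; ring
    _ < 1 := by rwa [div_lt_one (by positivity)]
  have hzero : (b : ℤ) - a + q * (n - m) = 0 := Int.abs_lt_one_iff.1 (by exact_mod_cast hlt)
  have hdvd : (q : ℤ) ∣ (a : ℤ) - b := ⟨n - m, by linarith⟩
  have hsub : (a : ℤ) - b = 0 := Int.eq_zero_of_abs_lt_dvd hdvd (by rw [abs_lt]; omega)
  omega

/-- The `L²` energy of `F` on the (not necessarily disjoint) major arcs `𝔐(a/q; N, K)`, summed over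
the reduced residues `a` modulo `q`. -/
noncomputable def majorArcEnergy (F : ℝ → ℂ) (q N : ℕ) (K : ℝ) : ℝ :=
  ∑ a ∈ (Icc 1 q).filter (fun a => Nat.gcd a q = 1), ∫ γ in majorArc a q N K, ‖F γ‖ ^ 2

lemma integrableOn_norm_sq (hF : Continuous F) :
    IntegrableOn (fun γ => ‖F γ‖ ^ 2) (Set.Ioc 0 1) :=
  (Continuous.integrableOn_Icc (by fun_prop)).mono_set Set.Ioc_subset_Icc_self

lemma majorArcEnergy_le_mul_integral (hF : Continuous F) :
    majorArcEnergy F q N K ≤ q * ∫ γ in (0 : ℝ)..1, ‖F γ‖ ^ 2 := by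
  rw [intervalIntegral.integral_of_le zero_le_one]
  set E := ∫ γ in Set.Ioc (0 : ℝ) 1, ‖F γ‖ ^ 2
  have harc : ∀ a, ∫ γ in majorArc a q N K, ‖F γ‖ ^ 2 ≤ E := fun a =>
    setIntegral_mono_set (integrableOn_norm_sq hF) (ae_of_all _ fun _ => sq_nonneg _)
      majorArc_subset_Ioc.eventuallyLE
  have hE : 0 ≤ E := setIntegral_nonneg measurableSet_Ioc fun _ _ => sq_nonneg _
  have hcard : #{a ∈ Icc 1 q | Nat.gcd a q = 1} ≤ q := by
    simpa using card_filter_le (Icc 1 q) fun a => Nat.gcd a q = 1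
  calc majorArcEnergy F q N K ≤ #{a ∈ Icc 1 q | Nat.gcd a q = 1} • E :=
        sum_le_card_nsmul _ _ _ fun a _ => harc a
    _ ≤ q * E := by
        rw [nsmul_eq_mul]
        exact mul_le_mul_of_nonneg_right (by exact_mod_cast hcard) hE

lemma majorArcEnergy_le_integral (hF : Continuous F) (hN : 0 < N) (hK : 2 * K < N) :
    majorArcEnergy F q N K ≤ ∫ γ in (0 : ℝ)..1, ‖F γ‖ ^ 2 := by
  have hdisj : Set.PairwiseDisjoint ↑((Icc 1 q).filter fun a => Nat.gcd a q = 1)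
      fun a => majorArc a q N K := fun a ha b hb hab =>
    disjoint_majorArc (mem_filter.1 ha).1 (mem_filter.1 hb).1 hab hN hK
  rw [majorArcEnergy, ← integral_biUnion_finset _ (fun _ _ => measurableSet_majorArc) hdisj
    fun _ _ => (integrableOn_norm_sq hF).mono_set majorArc_subset_Ioc,
    intervalIntegral.integral_of_le zero_le_one]
  exact setIntegral_mono_set (integrableOn_norm_sq hF) (ae_of_all _ fun _ => sq_nonneg _)
    (Set.iUnion₂_subset fun _ _ => majorArc_subset_Ioc).eventuallyLE

lemma sq_div_two_mul_majorArcEnergy_le (hF : Continuous F) (hq : 0 < q) (hqd : q ∣ d)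
    (hphase : d * L * (K / (q * N)) ≤ 1 / 32) :
    (L : ℝ) ^ 2 / 2 * majorArcEnergy F q N K ≤
      majorArcEnergy (fun γ => F γ * ∑ j ∈ Icc 1 L, eu ((d * j : ℕ) * γ)) q N K := by
  simp only [majorArcEnergy, mul_sum, ← integral_const_mul]
  refine sum_le_sum fun a _ => setIntegral_mono_on ?_ ?_ measurableSet_majorArc fun γ hγ => ?_
  · exact ((integrableOn_norm_sq hF).mono_set majorArc_subset_Ioc).const_mul _
  · exact (integrableOn_norm_sq (by fun_prop)).mono_set majorArc_subset_Ioc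
  · rw [← mul_sum, norm_mul, mul_pow, mul_comm]
    gcongr
    exact sq_div_two_le_norm_sum_eu_sq hq hqd hγ hphase

end MajorArcs

section ProgSection

open Finset

variable {A S : Finset ℕ} {N d L : ℕ} {α M : ℝ}

/-- The section of `S` along a progression of difference `d` running down from `x`: the set of
`j ∈ [L]` with `x - d * j ∈ S`, written without subtraction. Its cardinality is the value at `x` of
the convolution of the indicator functions of `S` and of `{d, 2d, …, Ld}`. -/
def progSection (S : Finset ℕ) (d L x : ℕ) : Finset ℕ :=
  {j ∈ Icc 1 L | ∃ y ∈ S, y + d * j = x}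

lemma progSection_subset_Icc (S : Finset ℕ) (d L x : ℕ) : progSection S d L x ⊆ Icc 1 L :=
  filter_subset _ _

lemma card_progSection_le (S : Finset ℕ) (d L x : ℕ) : #(progSection S d L x) ≤ L := by
  simpa using card_le_card (progSection_subset_Icc S d L x)

lemma NoSquareDiff.progSection (hA : NoSquareDiff A) {q : ℕ} (hq : 0 < q) (L x : ℕ) :
    NoSquareDiff (progSection A (q ^ 2) L x) := by
  rintro i hi j hj n hn rfl
  obtain ⟨y, hy, hyx⟩ := (mem_filter.1 hi).2
  obtain ⟨z, hz, hzx⟩ := (mem_filter.1 hj).2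
  refine hA z hz y hy (q * n) (Nat.mul_pos hq hn) ?_
  linarith

lemma progSection_eq_image (S : Finset ℕ) (d L x : ℕ) :
    progSection S d L x = {p ∈ S ×ˢ Icc 1 L | p.1 + d * p.2 = x}.image Prod.snd := by
  ext j
  simp only [progSection, mem_filter, mem_image, mem_product, Prod.exists]
  aesop

lemma card_progSection (S : Finset ℕ) (d L x : ℕ) :
    #(progSection S d L x) = #{p ∈ S ×ˢ Icc 1 L | p.1 + d * p.2 = x} := by
  rw [progSection_eq_image, card_image_of_injOn]
  rintro ⟨y, j⟩ hp ⟨z, k⟩ hp' (rfl : j = k)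
  simp only [coe_filter, Set.mem_ofPred_eq] at hp hp'
  simp only [Prod.mk.injEq, and_true]
  omega

lemma sum_card_progSection_mul {R : Type*} [Semiring R] (hS : S ⊆ Icc 1 N) (d L : ℕ)
    (φ : ℕ → R) :
    ∑ x ∈ Icc 1 (N + d * L), (#(progSection S d L x) : R) * φ x =
      ∑ p ∈ S ×ˢ Icc 1 L, φ (p.1 + d * p.2) := by
  have hmaps : ∀ p ∈ S ×ˢ Icc 1 L, p.1 + d * p.2 ∈ Icc 1 (N + d * L) := by
    intro p hp
    obtain ⟨hy, hj⟩ := mem_product.1 hp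
    have hy' := mem_Icc.1 (hS hy)
    have hdj : d * p.2 ≤ d * L := Nat.mul_le_mul_left d (mem_Icc.1 hj).2
    rw [mem_Icc]
    omega
  simp [← sum_fiberwise_of_maps_to' hmaps, card_progSection, nsmul_eq_mul]

lemma sum_card_progSection {R : Type*} [Semiring R] (hS : S ⊆ Icc 1 N) (d L : ℕ) :
    ∑ x ∈ Icc 1 (N + d * L), (#(progSection S d L x) : R) = #S * L := by
  simpa using sum_card_progSection_mul (R := R) hS d L fun _ => 1

lemma sum_sq_card_progSection_sub_le (hA : A ⊆ Icc 1 N) (hα : 0 ≤ α)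
    (hcard : (#A : ℝ) = α * N) (hM : ∀ x, (#(progSection A d L x) : ℝ) ≤ M) :
    ∑ x ∈ Icc 1 (N + d * L),
        ((#(progSection A d L x) : ℝ) - α * #(progSection (Icc 1 N) d L x)) ^ 2 ≤
      α * L * N * (M - α * L) + 2 * α * M * d * L ^ 2 := by
  set u : ℕ → ℝ := fun x => #(progSection A d L x)
  set v : ℕ → ℝ := fun x => #(progSection (Icc 1 N) d L x)
  -- The cross term `2αu(L - v)` carries the boundary effect: `L - v` sums to exactly `d * L ^ 2`.
  have hpointwise (x : ℕ) : (u x - α * v x) ^ 2 ≤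
      (M - 2 * α * L) * u x + (α ^ 2 * L - 2 * α * M) * v x + 2 * α * M * L := by
    have hv : v x ≤ L := Nat.cast_le.2 (card_progSection_le _ _ _ _)
    have huu : u x * u x ≤ M * u x := by gcongr; exact hM x
    have hvv : α ^ 2 * (v x * v x) ≤ α ^ 2 * (L * v x) := by gcongr
    have huv : α * (u x * (L - v x)) ≤ α * (M * (L - v x)) := by
      gcongr
      exact hM x
    linarith
  have hu : ∑ x ∈ Icc 1 (N + d * L), u x = α * N * L := by
    rw [sum_card_progSection hA, hcard]
  have hv : ∑ x ∈ Icc 1 (N + d * L), v x = N * L := by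
    simpa using sum_card_progSection (R := ℝ) (Subset.refl (Icc 1 N)) d L
  refine (sum_le_sum fun x _ => hpointwise x).trans_eq ?_
  rw [sum_add_distrib, sum_add_distrib, ← mul_sum, ← mul_sum, hu, hv]
  simp only [sum_const, Nat.card_Icc, Nat.add_sub_cancel, nsmul_eq_mul]
  push_cast
  ring

end ProgSection

section BalancedFunction

open Finset

variable {A S : Finset ℕ} {N : ℕ} {α : ℝ}

/-- The Fourier transform of the balanced function `1_A - α 1_{[N]}` of `A`. It is meant for
`α = |A| / N`, but `α` is kept as a free parameter. -/
noncomputable def balancedHat (A : Finset ℕ) (N : ℕ) (α γ : ℝ) : ℂ :=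
  hatInd A γ - (α : ℂ) * hatInd (Icc 1 N) γ

@[fun_prop]
lemma continuous_balancedHat (A : Finset ℕ) (N : ℕ) (α : ℝ) :
    Continuous (balancedHat A N α) := by
  unfold balancedHat
  fun_prop

lemma hatInd_mul_sum_eu (hS : S ⊆ Icc 1 N) (d L : ℕ) (γ : ℝ) :
    hatInd S γ * ∑ j ∈ Icc 1 L, eu ((d * j : ℕ) * γ) =
      ∑ x ∈ Icc 1 (N + d * L), (#(progSection S d L x) : ℂ) * eu (x * γ) := by
  rw [sum_card_progSection_mul hS d L fun x => eu (x * γ), hatInd, sum_mul_sum, ← sum_product']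
  refine sum_congr rfl fun p _ => ?_
  rw [← eu_add, Nat.cast_add, add_mul]

lemma integral_norm_balancedHat_mul_sum_eu_sq (hA : A ⊆ Icc 1 N) (d L : ℕ) (α : ℝ) :
    ∫ γ in (0 : ℝ)..1, ‖balancedHat A N α γ * ∑ j ∈ Icc 1 L, eu ((d * j : ℕ) * γ)‖ ^ 2 =
      ∑ x ∈ Icc 1 (N + d * L),
        ((#(progSection A d L x) : ℝ) - α * #(progSection (Icc 1 N) d L x)) ^ 2 := by
  set w : ℕ → ℝ := fun x => #(progSection A d L x) - α * #(progSection (Icc 1 N) d L x)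
  have hpoly (γ : ℝ) : balancedHat A N α γ * ∑ j ∈ Icc 1 L, eu ((d * j : ℕ) * γ) =
      ∑ x ∈ Icc 1 (N + d * L), (w x : ℂ) * eu ((x : ℤ) * γ) := by
    rw [balancedHat, sub_mul, mul_assoc, hatInd_mul_sum_eu hA,
      hatInd_mul_sum_eu (Subset.refl (Icc 1 N)), mul_sum, ← sum_sub_distrib]
    refine sum_congr rfl fun x _ => ?_
    simp only [w]
    push_cast
    ring
  simp_rw [hpoly]
  rw [integral_norm_sq_sum_mul_eu _ _ Nat.cast_injective]
  simp only [Complex.norm_real, Real.norm_eq_abs, sq_abs, w]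

lemma integral_norm_balancedHat_sq_le (hA : A ⊆ Icc 1 N) (hα : 0 ≤ α)
    (hcard : (#A : ℝ) = α * N) :
    ∫ γ in (0 : ℝ)..1, ‖balancedHat A N α γ‖ ^ 2 ≤ #A := by
  -- For `d = 0` and `L = 1` the exponential sum is `1` and the sections count the point `x` itself.
  have hsum := sum_sq_card_progSection_sub_le (d := 0) (L := 1) (M := 1) hA hα hcard fun x => by
    exact_mod_cast card_progSection_le A 0 1 x
  have heu : eu 0 = 1 := by simpa using eu_intCast 0
  have hparseval := integral_norm_balancedHat_mul_sum_eu_sq hA 0 1 α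
  simp only [Icc_self, sum_singleton, zero_mul, Nat.cast_zero, heu, mul_one] at hparseval
  rw [hparseval, hcard]
  refine hsum.trans ?_
  have : 0 ≤ α * α * N := by positivity
  push_cast
  linarith

end BalancedFunction

section DensityIncrement

open Finset

variable {A : Finset ℕ} {N q d L : ℕ} {K ν α : ℝ}

lemma le_of_mul_card_le_mul_integral {t c : ℝ} (hA : A ⊆ Icc 1 N) (hα : 0 < α)
    (hcard : (#A : ℝ) = α * N) (hN : 0 < N) (hc : 0 ≤ c)
    (h : t * #A ≤ c * ∫ γ in (0 : ℝ)..1, ‖balancedHat A N α γ‖ ^ 2) : t ≤ c := by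
  have hApos : (0 : ℝ) < #A := by
    rw [hcard]
    positivity
  refine le_of_mul_le_mul_right (h.trans ?_) hApos
  gcongr
  exact integral_norm_balancedHat_sq_le hA hα.le hcard

lemma two_mul_lt_of_le_majorArcEnergy (hA : A ⊆ Icc 1 N) (hα : 0 < α)
    (hcard : (#A : ℝ) = α * N) (hN : 0 < N) (hqd : q ≤ d)
    (hsize : 2 * (K * d) < ν * α * N)
    (henergy : ν * α * #A ≤ majorArcEnergy (balancedHat A N α) q N K) :
    2 * K < N := by
  -- The arcs are not yet known to be disjoint, so only the bound losing a factor `q` is available.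
  have hνα : ν * α ≤ q := le_of_mul_card_le_mul_integral hA hα hcard hN q.cast_nonneg
    (henergy.trans (majorArcEnergy_le_mul_integral (by fun_prop)))
  refine lt_of_mul_lt_mul_right ?_ d.cast_nonneg
  calc 2 * K * d = 2 * (K * d) := mul_assoc _ _ _
    _ < ν * α * N := hsize
    _ ≤ d * N := by
      gcongr
      exact hνα.trans (by exact_mod_cast hqd)
    _ = N * d := mul_comm _ _

lemma exists_lt_card_progSection (hA : A ⊆ Icc 1 N) (hα : 0 < α) (hcard : (#A : ℝ) = α * N)
    (hν : 0 < ν) (hN : 0 < N) (hL : 0 < L) (hq : 0 < q) (hqd : q ∣ d) (hK : 2 * K < N)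
    (hphase : d * L * (K / (q * N)) ≤ 1 / 32) (hedge : (1 + ν) * (d * L) ≤ ν * N / 5)
    (henergy : ν * α * #A ≤ majorArcEnergy (balancedHat A N α) q N K) :
    ∃ x, (1 + ν / 20) * α * L < #(progSection A d L x) := by
  by_contra! hsmall
  have hchain : (L : ℝ) ^ 2 / 2 * (ν * α * (α * N)) ≤
      α * L * N * ((1 + ν / 20) * α * L - α * L) + 2 * α * ((1 + ν / 20) * α * L) * d * L ^ 2 :=
    calc (L : ℝ) ^ 2 / 2 * (ν * α * (α * N))
        ≤ (L : ℝ) ^ 2 / 2 * majorArcEnergy (balancedHat A N α) q N K := by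
          rw [← hcard]
          gcongr
      _ ≤ majorArcEnergy
            (fun γ => balancedHat A N α γ * ∑ j ∈ Icc 1 L, eu ((d * j : ℕ) * γ)) q N K :=
          sq_div_two_mul_majorArcEnergy_le (by fun_prop) hq hqd hphase
      _ ≤ ∫ γ in (0 : ℝ)..1,
            ‖balancedHat A N α γ * ∑ j ∈ Icc 1 L, eu ((d * j : ℕ) * γ)‖ ^ 2 :=
          majorArcEnergy_le_integral (by fun_prop) hN hK
      _ = ∑ x ∈ Icc 1 (N + d * L),
            ((#(progSection A d L x) : ℝ) - α * #(progSection (Icc 1 N) d L x)) ^ 2 :=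
          integral_norm_balancedHat_mul_sum_eu_sq hA d L α
      _ ≤ _ := sum_sq_card_progSection_sub_le hA hα.le hcard hsmall
  have hcancel : (α * L) ^ 2 * (ν * N / 2) ≤
      (α * L) ^ 2 * (ν * N / 20 + 2 * ((1 + ν / 20) * (d * L))) := by linarith
  have hupper := le_of_mul_le_mul_left hcancel (by positivity)
  have hνN : 0 < ν * N := by positivity
  have hνdL : 0 ≤ ν * (d * L) := by positivity
  linarith

lemma exists_lt_card_progSection_of_mul_le (hA : A ⊆ Icc 1 N) (hα : 0 < α) (hα1 : α ≤ 1)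
    (hcard : (#A : ℝ) = α * N) (hν : 0 < ν) (hνα : ν * α ≤ 1) (hN : 0 < N) (hL : 0 < L)
    (hq : 0 < q) (hqd : q ∣ d) (hK : 1 ≤ K) (hKN : 2 * K < N)
    (hdLK : d * L * K ≤ ν * α * N / 32)
    (henergy : ν * α * #A ≤ majorArcEnergy (balancedHat A N α) q N K) :
    ∃ x, (1 + ν / 20) * α * L < #(progSection A d L x) := by
  have hq1 : (1 : ℝ) ≤ q := by exact_mod_cast hq
  have hphase : d * L * (K / (q * N)) ≤ 1 / 32 := by
    rw [← mul_div_assoc, div_le_iff₀ (by positivity)]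
    calc d * L * K ≤ ν * α * N / 32 := hdLK
      _ ≤ q * N / 32 := by gcongr; exact hνα.trans hq1
      _ = 1 / 32 * (q * N) := by ring
  have hedge : (1 + ν) * (d * L) ≤ ν * N / 5 := calc
    (1 + ν) * (d * L) ≤ (1 + ν) * (d * L * K) :=
      mul_le_mul_of_nonneg_left (le_mul_of_one_le_right (by positivity) hK) (by positivity)
    _ ≤ (1 + ν) * (ν * α * N / 32) := by gcongr
    _ = (α + ν * α) * (ν * N / 32) := by ring
    _ ≤ (1 + 1) * (ν * N / 32) := by gcongr
    _ ≤ ν * N / 5 := by linarith [show 0 < ν * N by positivity]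
  exact exists_lt_card_progSection hA hα hcard hν hN hL hq hqd hKN hphase hedge henergy

end DensityIncrement

theorem statement_6_general {A : Finset ℕ} {N q d : ℕ} {K ν α : ℝ} (hν : 0 < ν) (hK : 1 ≤ K)
    (hN : 0 < N) (hd : 0 < d) (hqd : q ∣ d) (hX : 64 ≤ ν * α * N / (K * d))
    (hA : A ⊆ Finset.Icc 1 N) (hα : α = (A.card : ℝ) / N)
    (henergy : ν * α * A.card ≤ majorArcEnergy (balancedHat A N α) q N K) :
    ∃ N' : ℕ, 1 / 64 * ν * α * N / (K * d) ≤ N' ∧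
      ∃ x, (1 + ν / 20) * α ≤ ((progSection A d N' x).card : ℝ) / N' := by
  have hcard : (A.card : ℝ) = α * N := by rw [hα]; field_simp
  have hq : 0 < q := Nat.pos_of_dvd_of_pos hqd hd
  have hKd : 0 < K * d := by positivity
  have hsize : 64 * (K * d) ≤ ν * α * N := (le_div_iff₀ hKd).1 hX
  have hαpos : 0 < α := pos_of_mul_pos_right (by linarith : 0 < ν * N * α) (by positivity)
  have hα1 : α ≤ 1 := by
    rw [hα, div_le_one (by positivity)]
    exact_mod_cast (by simpa using Finset.card_le_card hA : A.card ≤ N)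
  have hKN : 2 * K < N := two_mul_lt_of_le_majorArcEnergy hA hαpos hcard hN
    (Nat.le_of_dvd hd hqd) (by linarith) henergy
  have hνα : ν * α ≤ 1 := le_of_mul_card_le_mul_integral hA hαpos hcard hN zero_le_one <| by
    simpa using henergy.trans (majorArcEnergy_le_integral (by fun_prop) hN hKN)
  set X := ν * α * N / (K * d) with hXdef
  obtain ⟨L, hXL, hLX⟩ : ∃ L : ℕ, X / 64 ≤ L ∧ L ≤ 2 * (X / 64) :=
    ⟨⌈X / 64⌉₊, Nat.le_ceil _, Nat.ceil_le_two_mul (by linarith)⟩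
  have hL : (0 : ℝ) < L := by linarith
  have hdLK : d * L * K ≤ ν * α * N / 32 := calc
    d * L * K = L * (K * d) := by ring
    _ ≤ 2 * (X / 64) * (K * d) := by gcongr
    _ = ν * α * N / 32 := by rw [hXdef]; field_simp; norm_num
  obtain ⟨x, hx⟩ := exists_lt_card_progSection_of_mul_le hA hαpos hα1 hcard hν hνα hN
    (by exact_mod_cast hL) hq hqd hK hKN hdLK henergy
  exact ⟨L, le_of_eq_of_le (by rw [hXdef]; ring) hXL, x, (le_div_iff₀ hL).2 hx.le⟩

theorem statement_6 :
    ∃ c > (0 : ℝ), ∃ C > (0 : ℝ), ∀ ν α : ℝ, 0 < ν → ν ≤ 1 → 0 < α → α ≤ 1 →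
      ∀ N K q : ℕ, 0 < N → 0 < K → 0 < q → C ≤ ν * α * N / (K * q ^ 2) →
      ∀ A : Finset ℕ, A ⊆ Finset.Icc 1 N → NoSquareDiff A → α = (A.card : ℝ) / N →
      ν * α * A.card ≤
        ∑ a ∈ (Finset.Icc 1 q).filter (fun a => Nat.gcd a q = 1),
          ∫ γ in majorArc a q N K,
            ‖hatInd A γ - (α : ℂ) * hatInd (Finset.Icc 1 N) γ‖ ^ 2 →
      ∃ N' : ℕ, c * ν * α * N / (K * q ^ 2) ≤ N' ∧
        ∃ A' : Finset ℕ, A' ⊆ Finset.Icc 1 N' ∧ NoSquareDiff A' ∧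
          (1 + ν / 20) * α ≤ (A'.card : ℝ) / N' := by
  refine ⟨1 / 64, by norm_num, 64, by norm_num, ?_⟩
  intro ν α hν _ _ _ N K q hN hK hq hX A hA hsq hα henergy
  obtain ⟨N', hN', x, hx⟩ := statement_6_general hν (by exact_mod_cast hK) hN (d := q ^ 2)
    (by positivity) (dvd_pow_self q two_ne_zero) (by exact_mod_cast hX) hA hα henergy
  exact ⟨N', by exact_mod_cast hN', progSection A (q ^ 2) N' x, progSection_subset_Icc A _ _ x,
    hsq.progSection hq N' x, hx⟩
end
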